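/- Let T : M_m → M_m be a unital completely positive map that is self-adjoint with respect to Tr (so T is also trace preserving), let N be the multiplicative domain of T, and let E be the trace-preserving conditional expectation onto N. Suppose μ := ‖T∘(I − E)‖_{2→2} < 1. Then for every n ≥ 1, every density ρ ∈ M_n ⊗ M_m and every k ≥ 1: D((id_{M_n} ⊗ T)^k(ρ) ‖ M_n ⊗ N) ≤ 2 μ^k exp(D₂(ρ ‖ M_n ⊗ N)/2). Moreover, if k ≥ (log(1/μ))^{−1} (log(4/ε²) + D_{2,cb}(M_m‖N)/2) for some ε > 0, then ‖(id ⊗ T)^k(ρ) − (id ⊗ E)(ρ)‖_1 ≤ ε when k is even, and ‖(id ⊗ T)^k(ρ) − (id ⊗ (T∘E))(ρ)‖_1 ≤ ε when k is odd. -/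

import Mathlib

open scoped ENNReal Classical ComplexOrder
open Matrix

noncomputable section

namespace GJL

variable {n : Type*} [Fintype n] [DecidableEq n]

/-- `Mat n` is the matrix *-algebra with rows and columns indexed by `n`. -/
abbrev Mat (n : Type*) [Fintype n] [DecidableEq n] := Matrix n n ℂ

/-- A density matrix: positive semidefinite with trace one. -/
def IsDensity (ρ : Mat n) : Prop := ρ.PosSemidef ∧ ρ.trace = 1

/-- The real part of the (matrix) trace. -/
def traceR (A : Mat n) : ℝ := (A.trace).re

/-- Real matrix powers via the continuous functional calculus.  For positive
semidefinite matrices and negative exponents this is the generalized inverse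
power on the support, since `(0 : ℝ) ^ r = 0` for `r ≠ 0`. -/
def mpow (A : Mat n) (r : ℝ) : Mat n := cfc (fun x : ℝ => x ^ r) A

/-- Matrix logarithm on the support (`Real.log 0 = 0`). -/
def mlog (A : Mat n) : Mat n := cfc Real.log A

/-- Schatten `p`-norm `(Tr ((x* x)^(p/2)))^(1/p)`. -/
def snorm (p : ℝ) (x : Mat n) : ℝ := (traceR (mpow (xᴴ * x) (p/2))) ^ (1/p)

/-- Operator norm `‖x‖_∞`. -/
def opNorm (x : Mat n) : ℝ := ‖(Matrix.toEuclideanCLM (𝕜 := ℂ) x : EuclideanSpace ℂ n →L[ℂ] EuclideanSpace ℂ n)‖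

/-- The support projection of `ρ` is dominated by that of `σ` (for positive
semidefinite matrices: `ker σ ⊆ ker ρ`). -/
def suppLe (ρ σ : Mat n) : Prop := ∀ v, σ.mulVec v = 0 → ρ.mulVec v = 0

/-- `e` is the support projection of `ρ`. -/
def IsSupportProj (ρ e : Mat n) : Prop :=
  e.IsHermitian ∧ e * e = e ∧ ∀ v, e.mulVec v = 0 ↔ ρ.mulVec v = 0

/-- `D_∞(ρ‖σ) = log min {λ ≥ 0 | ρ ≤ λ σ}`, `⊤` if no such `λ` exists. -/
def Dinf (ρ σ : Mat n) : EReal :=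
  if ∃ c : ℝ, 0 ≤ c ∧ (c • σ - ρ).PosSemidef then
    ((Real.log (sInf {c : ℝ | 0 ≤ c ∧ (c • σ - ρ).PosSemidef}) : ℝ) : EReal)
  else ⊤

/-- Umegaki relative entropy `D(ρ‖σ) = Tr(ρ log ρ - ρ log σ)`, `⊤` if the
support condition fails. -/
def DU (ρ σ : Mat n) : EReal :=
  if suppLe ρ σ then ((traceR (ρ * mlog ρ - ρ * mlog σ) : ℝ) : EReal) else ⊤

/-- The sandwiched matrix `σ^{(1-p)/(2p)} ρ σ^{(1-p)/(2p)}`; note that for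
`p > 1` the exponent `(1-p)/(2p)` equals `-1/(2p')` with `1/p + 1/p' = 1`. -/
def sandwich (p : ℝ) (ρ σ : Mat n) : Mat n :=
  mpow σ ((1 - p)/(2*p)) * ρ * mpow σ ((1 - p)/(2*p))

/-- The sandwiched Rényi relative entropy `D_p(ρ‖σ)` for `p ∈ [1/2, ∞]`:
for `p ∈ (1,∞)` it is `p' log ‖σ^{-1/(2p')} ρ σ^{-1/(2p')}‖_p
= (p-1)⁻¹ log Tr ((σ^{-1/(2p')} ρ σ^{-1/(2p')})^p)` when the support of `ρ` is
dominated by that of `σ` and `⊤` otherwise; for `p ∈ [1/2, 1)` it is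
`(p-1)⁻¹ log Tr ((σ^{(1-p)/(2p)} ρ σ^{(1-p)/(2p)})^p)` (`⊤` when the trace
vanishes, i.e. when the honest value is `+∞`); `D_1` is the Umegaki relative
entropy and `D_∞` the max-relative entropy. -/
def Dp (p : ℝ≥0∞) (ρ σ : Mat n) : EReal :=
  if p = ⊤ then Dinf ρ σ
  else if p = 1 then DU ρ σ
  else if 1 < p.toReal ∧ ¬ suppLe ρ σ then ⊤
  else if traceR (mpow (sandwich p.toReal ρ σ) p.toReal) = 0 then ⊤
  else (((p.toReal - 1)⁻¹ * Real.log (traceR (mpow (sandwich p.toReal ρ σ) p.toReal)) : ℝ) : EReal)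

/-- `D_p(ρ‖S) = inf { D_p(ρ‖σ) | σ a density in S }`. -/
def DpSet (p : ℝ≥0∞) (ρ : Mat n) (S : Set (Mat n)) : EReal :=
  ⨅ σ ∈ {σ ∈ S | IsDensity σ}, Dp p ρ σ

/-- `D_p(A‖S) = sup { D_p(ρ‖S) | ρ a density in A }`. -/
def DpRel (p : ℝ≥0∞) (A S : Set (Mat n)) : EReal :=
  ⨆ ρ ∈ {ρ ∈ A | IsDensity ρ}, DpSet p ρ S

open scoped Kronecker in
/-- The algebraic tensor product `N₁ ⊗ N₂ ⊆ M_{n₁} ⊗ M_{n₂} = M_{n₁ × n₂}`,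
realized as the linear span of Kronecker products. -/
def tensorSpan {n₁ n₂ : Type*} [Fintype n₁] [DecidableEq n₁] [Fintype n₂] [DecidableEq n₂]
    (N₁ : Set (Mat n₁)) (N₂ : Set (Mat n₂)) : Set (Mat (n₁ × n₂)) :=
  ↑(Submodule.span ℂ {z : Mat (n₁ × n₂) | ∃ x ∈ N₁, ∃ y ∈ N₂, z = x ⊗ₖ y})

/-- `D_{p,cb}(M‖N) = sup_k D_p(M_k ⊗ M ‖ M_k ⊗ N)`. -/
def DpCb (p : ℝ≥0∞) (N : Set (Mat n)) : EReal :=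
  ⨆ k : ℕ, DpRel p Set.univ (tensorSpan (Set.univ : Set (Mat (Fin k))) N)

/-- `E` is the trace preserving conditional expectation onto `N`, i.e. the
orthogonal projection onto `N` with respect to the Hilbert–Schmidt inner
product `⟨x,y⟩ = Tr(x* y)`. -/
def IsCondExp (N : Set (Mat n)) (E : Mat n →ₗ[ℂ] Mat n) : Prop :=
  (∀ x, E x ∈ N) ∧ (∀ x ∈ N, E x = x) ∧
    ∀ x y, y ∈ N → ((E x)ᴴ * y).trace = (xᴴ * y).trace

/-- The Pimsner–Popa index constant
`λ(M:N) = max {c ≥ 0 | c x ≤ E(x) for all x ≥ 0}`. -/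
def ppIndex (E : Mat n →ₗ[ℂ] Mat n) : ℝ :=
  sSup {c : ℝ | 0 ≤ c ∧ ∀ x : Mat n, x.PosSemidef → (E x - c • x).PosSemidef}

/-- von Neumann entropy `H(ρ) = -Tr(ρ log ρ)`. -/
def vnEntropy (ρ : Mat n) : ℝ := - traceR (ρ * mlog ρ)

/-- The amplification `id_{M_k} ⊗ Φ` acting on `M_k ⊗ M_n = M_{k × n}`,
applying `Φ` blockwise. -/
def ampFun (k : Type*) [Fintype k] [DecidableEq k] (Φ : Mat n →ₗ[ℂ] Mat n)
    (X : Mat (k × n)) : Mat (k × n) :=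
  Matrix.of fun a b => Φ (Matrix.of fun s t => X (a.1, s) (b.1, t)) a.2 b.2

/-- Complete positivity: all amplifications `id_{M_k} ⊗ Φ` preserve positive
semidefiniteness. -/
def IsCP (Φ : Mat n →ₗ[ℂ] Mat n) : Prop :=
  ∀ (k : ℕ) (X : Mat (Fin k × n)), X.PosSemidef → (ampFun (Fin k) Φ X).PosSemidef

/-- Completely positive and trace preserving. -/
def IsCPTP (Φ : Mat n →ₗ[ℂ] Mat n) : Prop :=
  IsCP Φ ∧ ∀ x : Mat n, (Φ x).trace = x.trace

/-- The multiplicative domain of a unital completely positive map. -/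
def multDomain {n : Type*} [Fintype n] [DecidableEq n]
    (T : Mat n →ₗ[ℂ] Mat n) : Set (Mat n) :=
  {a | T (aᴴ * a) = (T aᴴ) * T a ∧ T (a * aᴴ) = T a * (T aᴴ)}

/-- The `2 → 2` operator norm of a linear map on `M_n`, with respect to the
Hilbert–Schmidt norm. -/
def norm22 {n : Type*} [Fintype n] [DecidableEq n]
    (Φ : Mat n →ₗ[ℂ] Mat n) : ℝ :=
  sSup {c : ℝ | ∃ x : Mat n, snorm 2 x ≤ 1 ∧ c = snorm 2 (Φ x)}

/-!
A density `σ` in `N` is transported by `T` together with all its powers, because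
`T` is multiplicative over `N`. Hence the sandwich of `T ρ - E (T ρ)` by `T σ` is the image under
`T ∘ (id - E)` of the sandwich of `ρ` by `σ`, and its Hilbert–Schmidt norm is at most
`q = μ * ‖σ ^ (-1/4) ρ σ ^ (-1/4)‖₂`. Optimizing over `σ` turns `q` into
`μ * exp (D₂ (ρ ‖ N) / 2)`.

For the entropy estimate, compare `ω = T ρ` with the density in `N` proportional to
`X = E ω + δ T σ`, where `δ ≥ q`. Klein's inequality with `log x ≤ x - 1` at the square root bounds
`Tr (ω log ω - ω log X)` by `Tr (ω X ^ (-1/2) ω X ^ (-1/2)) - 1`, and splitting `ω` into `E ω` and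
its part orthogonal to `N` bounds this by `δ`; normalizing `X` costs another `log (1 + δ) ≤ δ`.

For the trace norm, Hölder's inequality gives `‖ω - E ω‖₁ ≤ q`. The parity of `k` enters only
through `T ∘ T ∘ E = E`. All of this is stable under powers of `T`, which replace `μ` by `μ ^ k`,
and under amplification by `M_n`, which preserves `μ` because the Hilbert–Schmidt norm is computed
blockwise.
-/

section Trace

variable {A B : Mat n}

lemma traceR_add (A B : Mat n) : traceR (A + B) = traceR A + traceR B := by
  simp only [traceR, trace_add, Complex.add_re]

lemma traceR_sub (A B : Mat n) : traceR (A - B) = traceR A - traceR B := by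
  simp only [traceR, trace_sub, Complex.sub_re]

lemma traceR_neg (A : Mat n) : traceR (-A) = -traceR A := by
  simp only [traceR, trace_neg, Complex.neg_re]

lemma traceR_smul (c : ℝ) (A : Mat n) : traceR (c • A) = c * traceR A := by
  simp only [traceR, trace_smul, Complex.smul_re, smul_eq_mul]

lemma traceR_mul_comm (A B : Mat n) : traceR (A * B) = traceR (B * A) := by
  rw [traceR, trace_mul_comm, ← traceR]

lemma traceR_nonneg (hA : A.PosSemidef) : 0 ≤ traceR A :=
  (Complex.le_def.1 hA.trace_nonneg).1

open scoped MatrixOrder in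
lemma traceR_mul_nonneg (hA : A.PosSemidef) (hB : B.PosSemidef) : 0 ≤ traceR (A * B) := by
  obtain ⟨C, rfl⟩ := CStarAlgebra.nonneg_iff_eq_star_mul_self.1 hB.nonneg
  rw [← mul_assoc, traceR_mul_comm, ← mul_assoc]
  exact traceR_nonneg (hA.mul_mul_conjTranspose_same C)

lemma IsDensity.traceR_eq_one {ρ : Mat n} (hρ : IsDensity ρ) : traceR ρ = 1 := by
  rw [traceR, hρ.2, Complex.one_re]

lemma eq_of_forall_trace_conjTranspose_mul_eq
    (h : ∀ C : Mat n, (Cᴴ * A).trace = (Cᴴ * B).trace) : A = B := by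
  rw [← sub_eq_zero, ← trace_conjTranspose_mul_self_eq_zero_iff, Matrix.mul_sub, trace_sub, h,
    sub_self]

end Trace

section HilbertSchmidt

lemma inner_toLp_vec (x y : Mat n) :
    inner ℂ (WithLp.toLp 2 x.vec) (WithLp.toLp 2 y.vec) = (xᴴ * y).trace := by
  rw [EuclideanSpace.inner_toLp_toLp, dotProduct_comm, star_vec_dotProduct_vec]

lemma snorm_two_eq_norm_vec (x : Mat n) : snorm 2 x = ‖WithLp.toLp 2 x.vec‖ := by
  have hx : mpow (xᴴ * x) (2 / 2) = xᴴ * x := by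
    simp only [mpow, div_self (two_ne_zero (α := ℝ)), Real.rpow_one]
    exact cfc_id' ℝ _ (isHermitian_conjTranspose_mul_self x)
  rw [norm_eq_sqrt_re_inner (𝕜 := ℂ), inner_toLp_vec, snorm, hx, ← Real.sqrt_eq_rpow]
  rfl

lemma snorm_two_nonneg (x : Mat n) : 0 ≤ snorm 2 x :=
  (norm_nonneg _).trans_eq (snorm_two_eq_norm_vec x).symm

lemma snorm_two_sq (x : Mat n) : snorm 2 x ^ 2 = traceR (xᴴ * x) := by
  rw [snorm_two_eq_norm_vec, norm_sq_eq_re_inner (𝕜 := ℂ), inner_toLp_vec]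
  rfl

lemma snorm_two_conjTranspose (x : Mat n) : snorm 2 xᴴ = snorm 2 x := by
  rw [← pow_left_inj₀ (snorm_two_nonneg _) (snorm_two_nonneg _) two_ne_zero, snorm_two_sq,
    snorm_two_sq, conjTranspose_conjTranspose, traceR_mul_comm]

lemma snorm_two_smul (c : ℂ) (x : Mat n) : snorm 2 (c • x) = ‖c‖ * snorm 2 x := by
  rw [snorm_two_eq_norm_vec, snorm_two_eq_norm_vec, vec_smul, WithLp.toLp_smul, norm_smul]

lemma traceR_conjTranspose_mul_le (x y : Mat n) :
    traceR (xᴴ * y) ≤ snorm 2 x * snorm 2 y := by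
  rw [snorm_two_eq_norm_vec, snorm_two_eq_norm_vec, traceR, ← inner_toLp_vec]
  exact re_inner_le_norm (𝕜 := ℂ) _ _

lemma two_mul_traceR_conjTranspose_mul_le (x y : Mat n) :
    2 * traceR (xᴴ * y) ≤ snorm 2 x ^ 2 + snorm 2 y ^ 2 := by
  linarith [traceR_conjTranspose_mul_le x y, two_mul_le_add_sq (snorm 2 x) (snorm 2 y)]

lemma snorm_two_mul_le {a : Mat n} (ha : (1 - aᴴ * a).PosSemidef) (x : Mat n) :
    snorm 2 (a * x) ≤ snorm 2 x := by
  refine le_of_sq_le_sq ?_ (snorm_two_nonneg x)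
  have h := traceR_nonneg (ha.conjTranspose_mul_mul_same x)
  have hexpand : xᴴ * (1 - aᴴ * a) * x = xᴴ * x - (a * x)ᴴ * (a * x) := by
    simp only [conjTranspose_mul, Matrix.mul_sub, Matrix.sub_mul, mul_one, mul_assoc]
  rw [hexpand, traceR_sub, sub_nonneg] at h
  rwa [snorm_two_sq, snorm_two_sq]

lemma snorm_two_mul_mul_conjTranspose_le {a : Mat n} (ha : (1 - aᴴ * a).PosSemidef) (x : Mat n) :
    snorm 2 (a * x * aᴴ) ≤ snorm 2 x :=
  calc snorm 2 (a * x * aᴴ) = snorm 2 (a * (a * xᴴ)ᴴ) := by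
        rw [conjTranspose_mul, conjTranspose_conjTranspose, mul_assoc]
    _ ≤ snorm 2 (a * xᴴ) := (snorm_two_mul_le ha _).trans_eq (snorm_two_conjTranspose _)
    _ ≤ snorm 2 x := (snorm_two_mul_le ha _).trans_eq (snorm_two_conjTranspose x)

/-- The linear isometry between the matrix algebra with the Hilbert–Schmidt norm and a Euclidean
space, through which the theory of bounded operators applies to maps of matrix algebras. -/
def vecEuclidean : Mat n ≃ₗ[ℂ] EuclideanSpace ℂ (n × n) :=
  (LinearEquiv.ofBijective
    { toFun := vec, map_add' := vec_add, map_smul' := vec_smul } vec_bijective).trans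
    (WithLp.linearEquiv 2 ℂ (n × n → ℂ)).symm

lemma norm_vecEuclidean (x : Mat n) : ‖vecEuclidean x‖ = snorm 2 x :=
  (snorm_two_eq_norm_vec x).symm

lemma snorm_two_eq_zero_iff {x : Mat n} : snorm 2 x = 0 ↔ x = 0 := by
  rw [← norm_vecEuclidean, norm_eq_zero, LinearEquiv.map_eq_zero_iff]

lemma exists_snorm_two_apply_le (Φ : Mat n →ₗ[ℂ] Mat n) :
    ∃ C, ∀ x, snorm 2 (Φ x) ≤ C * snorm 2 x := by
  let Ψ := LinearMap.toContinuousLinearMap (vecEuclidean.conj Φ)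
  refine ⟨‖Ψ‖, fun x => ?_⟩
  simpa [Ψ, LinearEquiv.conj_apply, norm_vecEuclidean] using Ψ.le_opNorm (vecEuclidean x)

lemma bddAbove_norm22_set (Φ : Mat n →ₗ[ℂ] Mat n) :
    BddAbove {c : ℝ | ∃ x : Mat n, snorm 2 x ≤ 1 ∧ c = snorm 2 (Φ x)} := by
  obtain ⟨C, hC⟩ := exists_snorm_two_apply_le Φ
  refine ⟨|C|, ?_⟩
  rintro _ ⟨x, hx, rfl⟩
  calc snorm 2 (Φ x) ≤ C * snorm 2 x := hC x
    _ ≤ |C| * 1 := mul_le_mul (le_abs_self C) hx (snorm_two_nonneg x) (abs_nonneg C)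
    _ = |C| := mul_one _

lemma norm22_nonneg (Φ : Mat n →ₗ[ℂ] Mat n) : 0 ≤ norm22 Φ := by
  refine Real.sSup_nonneg ?_
  rintro _ ⟨x, -, rfl⟩
  exact snorm_two_nonneg _

lemma snorm_two_apply_le_norm22_mul (Φ : Mat n →ₗ[ℂ] Mat n) (x : Mat n) :
    snorm 2 (Φ x) ≤ norm22 Φ * snorm 2 x := by
  rcases (snorm_two_nonneg x).eq_or_lt with hx | hx
  · obtain ⟨C, hC⟩ := exists_snorm_two_apply_le Φ
    simpa only [← hx, mul_zero] using hC x
  · have hs : snorm 2 (((snorm 2 x)⁻¹ : ℂ) • x) = 1 := by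
      rw [snorm_two_smul, ← Complex.ofReal_inv, Complex.norm_of_nonneg (inv_nonneg.2 hx.le),
        inv_mul_cancel₀ hx.ne']
    have h : (snorm 2 x)⁻¹ * snorm 2 (Φ x) ≤ norm22 Φ := by
      refine le_csSup (bddAbove_norm22_set Φ) ⟨((snorm 2 x)⁻¹ : ℂ) • x, hs.le, ?_⟩
      rw [map_smul, snorm_two_smul, ← Complex.ofReal_inv,
        Complex.norm_of_nonneg (inv_nonneg.2 hx.le)]
    rwa [inv_mul_le_iff₀ hx, mul_comm] at h

end HilbertSchmidt

section FunctionalCalculus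

variable {A B : Mat n} {f : ℝ → ℝ}

lemma continuousOn_real_spectrum (A : Mat n) (f : ℝ → ℝ) : ContinuousOn f (spectrum ℝ A) :=
  A.finite_real_spectrum.continuousOn f

lemma cfc_mul_cfc (A : Mat n) (f g : ℝ → ℝ) : cfc f A * cfc g A = cfc (fun x => f x * g x) A :=
  (cfc_mul f g A (continuousOn_real_spectrum A f) (continuousOn_real_spectrum A g)).symm

lemma isHermitian_cfc (f : ℝ → ℝ) (A : Mat n) : (cfc f A).IsHermitian := cfc_predicate f A

lemma isHermitian_mpow (A : Mat n) (r : ℝ) : (mpow A r).IsHermitian := isHermitian_cfc _ A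

open scoped MatrixOrder in
lemma posSemidef_cfc (hf : ∀ x ∈ spectrum ℝ A, 0 ≤ f x) : (cfc f A).PosSemidef :=
  (cfc_nonneg hf).posSemidef

open scoped MatrixOrder in
lemma spectrum_nonneg_of_posSemidef (hA : A.PosSemidef) : ∀ x ∈ spectrum ℝ A, 0 ≤ x :=
  fun _ hx => _root_.spectrum_nonneg_of_nonneg hA.nonneg hx

open scoped MatrixOrder in
lemma spectrum_pos_of_posDef (hA : A.PosDef) : ∀ x ∈ spectrum ℝ A, 0 < x :=
  fun _ hx => hA.isStrictlyPositive.spectrum_pos hx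

lemma posSemidef_mpow (hA : A.PosSemidef) (r : ℝ) : (mpow A r).PosSemidef :=
  posSemidef_cfc fun x hx => Real.rpow_nonneg (spectrum_nonneg_of_posSemidef hA x hx) r

lemma mpow_zero (hA : A.IsHermitian) : mpow A 0 = 1 := by
  simp only [mpow, Real.rpow_zero]
  exact cfc_const_one ℝ A hA

lemma mpow_one (hA : A.IsHermitian) : mpow A 1 = A := by
  simp only [mpow, Real.rpow_one]
  exact cfc_id' ℝ A hA

lemma mpow_mul_mpow (hA : A.PosDef) (r s : ℝ) : mpow A r * mpow A s = mpow A (r + s) := by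
  rw [mpow, mpow, cfc_mul_cfc]
  exact cfc_congr fun x hx => (Real.rpow_add (spectrum_pos_of_posDef hA x hx) r s).symm

lemma mpow_mul_mpow_of_nonneg (hA : A.PosSemidef) {r s : ℝ} (hr : 0 ≤ r) (hs : 0 ≤ s) :
    mpow A r * mpow A s = mpow A (r + s) := by
  rw [mpow, mpow, cfc_mul_cfc]
  exact cfc_congr fun x hx =>
    (Real.rpow_add_of_nonneg (spectrum_nonneg_of_posSemidef hA x hx) hr hs).symm

lemma mpow_smul (hA : A.PosSemidef) {c : ℝ} (hc : 0 ≤ c) (r : ℝ) :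
    mpow (c • A) r = c ^ r • mpow A r := by
  calc mpow (c • A) r = cfc (fun x => (c * x) ^ r) A :=
        (cfc_comp_smul c (fun x => x ^ r) A ((A.finite_real_spectrum.image _).continuousOn _)
          hA.isHermitian).symm
    _ = cfc (fun x => c ^ r * x ^ r) A :=
        cfc_congr fun x hx => Real.mul_rpow hc (spectrum_nonneg_of_posSemidef hA x hx)
    _ = c ^ r • mpow A r := cfc_smul (c ^ r) _ A (continuousOn_real_spectrum A _)

open scoped MatrixOrder Matrix.Norms.L2Operator in
lemma mpow_antitone {r : ℝ} (hr : r ∈ Set.Icc (-1) 0) (hA : A.PosDef)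
    (hAB : (B - A).PosSemidef) : (mpow A r - mpow B r).PosSemidef := by
  have hB : B.PosDef := by simpa only [add_sub_cancel] using hA.add_posSemidef hAB
  have mpow_eq {C : Mat n} (hC : C.PosDef) : mpow C r = (C ^ (-1 : ℝ)) ^ (-r) := by
    rw [CFC.rpow_rpow C _ _ (by norm_num) hC.isStrictlyPositive, neg_one_mul, neg_neg,
      CFC.rpow_eq_cfc_real hC.posSemidef.nonneg, mpow]
  rw [mpow_eq hA, mpow_eq hB]
  exact CFC.rpow_le_rpow ⟨neg_nonneg.2 hr.2, neg_le.1 hr.1⟩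
    (CStarAlgebra.rpow_neg_one_le_rpow_neg_one hAB hA.isStrictlyPositive)

lemma exists_polynomial_cfc_eq (hA : A.IsHermitian) (hB : B.IsHermitian) (f : ℝ → ℝ) :
    ∃ p : Polynomial ℝ, cfc f A = Polynomial.aeval A p ∧ cfc f B = Polynomial.aeval B p := by
  let s := (A.finite_real_spectrum.union B.finite_real_spectrum).toFinset
  let p := Lagrange.interpolate s id f
  have hp {x} (hx : x ∈ s) : f x = p.eval x :=
    (Lagrange.eval_interpolate_at_node (v := id) f Function.injective_id.injOn hx).symm
  refine ⟨p, ?_, ?_⟩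
  · rw [← cfc_polynomial p A hA]
    exact cfc_congr fun x hx => hp ((Set.Finite.mem_toFinset _).2 (.inl hx))
  · rw [← cfc_polynomial p B hB]
    exact cfc_congr fun x hx => hp ((Set.Finite.mem_toFinset _).2 (.inr hx))

lemma cfc_mem (S : StarSubalgebra ℂ (Mat n)) (hA : A.IsHermitian) (hAS : A ∈ S) (f : ℝ → ℝ) :
    cfc f A ∈ S := by
  obtain ⟨p, hp, -⟩ := exists_polynomial_cfc_eq hA hA f
  rw [hp, Polynomial.aeval_eq_sum_range]
  refine sum_mem fun i _ => ?_
  rw [← Complex.coe_smul]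
  exact S.smul_mem (pow_mem hAS i) _

lemma map_cfc_of_mul {S : StarSubalgebra ℂ (Mat n)} {T : Mat n →ₗ[ℂ] Mat n} (hT1 : T 1 = 1)
    (hmul : ∀ x ∈ S, ∀ y, T (x * y) = T x * T y) (hA : A.IsHermitian) (hTA : (T A).IsHermitian)
    (hAS : A ∈ S) (f : ℝ → ℝ) : T (cfc f A) = cfc f (T A) := by
  obtain ⟨p, hp, hp'⟩ := exists_polynomial_cfc_eq hA hTA f
  have hpow (i : ℕ) : T (A ^ i) = T A ^ i := by
    induction i with
    | zero => rw [pow_zero, pow_zero, hT1]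
    | succ i ih => rw [pow_succ', pow_succ', hmul A hAS, ih]
  rw [hp, hp', Polynomial.aeval_eq_sum_range, Polynomial.aeval_eq_sum_range, map_sum]
  exact Finset.sum_congr rfl fun i _ => by rw [LinearMap.map_smul_of_tower, hpow]

end FunctionalCalculus

section RelativeEntropy

variable {ω ξ : Mat n}

lemma exists_traceR_cfc_mul_cfc_eq {A B : Mat n} (hA : A.IsHermitian) (hB : B.IsHermitian) :
    ∃ w : n → n → ℝ, (∀ a b, 0 ≤ w a b) ∧ ∀ f g : ℝ → ℝ, traceR (cfc f A * cfc g B) =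
      ∑ a, ∑ b, w a b * (f (hA.eigenvalues a) * g (hB.eigenvalues b)) := by
  let U : Mat n := hA.eigenvectorUnitary
  let V : Mat n := hB.eigenvectorUnitary
  refine ⟨fun a b => Complex.normSq ((Uᴴ * V) a b), fun a b => Complex.normSq_nonneg _,
    fun f g => ?_⟩
  have hconj : traceR (cfc f A * cfc g B) = traceR (diagonal (fun a => (f (hA.eigenvalues a) : ℂ)) *
      (Uᴴ * V) * diagonal (fun b => (g (hB.eigenvalues b) : ℂ)) * (Uᴴ * V)ᴴ) := by
    rw [hA.cfc_eq, hB.cfc_eq, IsHermitian.cfc, IsHermitian.cfc, Unitary.conjStarAlgAut_apply,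
      Unitary.conjStarAlgAut_apply, conjTranspose_mul, conjTranspose_conjTranspose]
    simp only [mul_assoc]
    rw [traceR_mul_comm]
    simp only [mul_assoc]
    rfl
  rw [hconj, traceR, trace, Complex.re_sum]
  refine Finset.sum_congr rfl fun a _ => ?_
  rw [diag_apply, mul_apply, Complex.re_sum]
  refine Finset.sum_congr rfl fun b _ => ?_
  rw [mul_diagonal, diagonal_mul, conjTranspose_apply, Complex.star_def]
  have hterm : (f (hA.eigenvalues a) : ℂ) * (Uᴴ * V) a b * (g (hB.eigenvalues b) : ℂ) *
      starRingEnd ℂ ((Uᴴ * V) a b) =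
      ((Complex.normSq ((Uᴴ * V) a b) *
        (f (hA.eigenvalues a) * g (hB.eigenvalues b)) : ℝ) : ℂ) := by
    push_cast
    rw [← Complex.mul_conj]
    ring
  rw [hterm, Complex.ofReal_re]

lemma mul_log_sub_mul_log_le {p r : ℝ} (hp : 0 ≤ p) (hr : 0 < r) :
    p * (Real.log p - Real.log r) ≤ 2 * (p ^ (3 / 2 : ℝ) * r ^ (-1 / 2 : ℝ) - p) := by
  rcases hp.eq_or_lt with rfl | hp
  · norm_num
  · have h := Real.log_le_sub_one_of_pos
      (mul_pos (Real.rpow_pos_of_pos hp (1 / 2)) (Real.rpow_pos_of_pos hr (-1 / 2)))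
    rw [Real.log_mul (Real.rpow_pos_of_pos hp _).ne' (Real.rpow_pos_of_pos hr _).ne',
      Real.log_rpow hp, Real.log_rpow hr] at h
    have hsplit : p ^ (3 / 2 : ℝ) = p * p ^ (1 / 2 : ℝ) := by
      rw [← Real.rpow_one_add' hp.le (by norm_num)]
      norm_num
    rw [hsplit]
    nlinarith

lemma traceR_mul_mlog_sub_mul_mlog_le (hω : ω.PosSemidef) (hξ : ξ.PosDef) :
    traceR (ω * mlog ω - ω * mlog ξ) ≤
      2 * (traceR (mpow ω (3 / 2) * mpow ξ (-1 / 2)) - traceR ω) := by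
  obtain ⟨w, hw, htr⟩ := exists_traceR_cfc_mul_cfc_eq hω.isHermitian hξ.isHermitian
  have hid : cfc (fun x : ℝ => x) ω = ω := cfc_id' ℝ ω hω.isHermitian
  have hone : cfc (fun _ : ℝ => (1 : ℝ)) ξ = 1 := cfc_const_one ℝ ξ hξ.isHermitian
  have hentropy := htr (fun x => x * Real.log x) fun _ => 1
  have hcross := htr (fun x => x) Real.log
  have hpower := htr (fun x => x ^ (3 / 2 : ℝ)) fun x => x ^ (-1 / 2 : ℝ)
  have hmass := htr (fun x => x) fun _ => 1
  rw [← cfc_mul_cfc, hid, hone, mul_one] at hentropy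
  rw [hid] at hcross
  rw [hid, hone, mul_one] at hmass
  rw [traceR_sub, mlog, mlog, mpow, mpow, hentropy, hcross, hpower, hmass]
  simp only [Finset.mul_sum, ← Finset.sum_sub_distrib, ← mul_sub, mul_one]
  refine Finset.sum_le_sum fun a _ => Finset.sum_le_sum fun b _ => ?_
  rw [mul_left_comm 2]
  exact mul_le_mul_of_nonneg_left
    (mul_log_sub_mul_log_le (hω.eigenvalues_nonneg a) (hξ.eigenvalues_pos b)) (hw a b)

lemma traceR_mul_mlog_sub_mul_mlog_le_quadratic (hω : ω.PosSemidef) (hξ : ξ.PosDef) :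
    traceR (ω * mlog ω - ω * mlog ξ) ≤
      traceR (ω * mpow ξ (-1 / 2) * (ω * mpow ξ (-1 / 2))) - traceR ω := by
  let s := mpow ω (1 / 2)
  let G := mpow ξ (-1 / 2)
  change _ ≤ traceR (ω * G * (ω * G)) - traceR ω
  have hs : sᴴ = s := isHermitian_mpow ω _
  have hG : Gᴴ = G := isHermitian_mpow ξ _
  have hss : s * s = ω := by
    rw [mpow_mul_mpow_of_nonneg hω (by norm_num) (by norm_num), add_halves,
      mpow_one hω.isHermitian]
  have hsω : s * ω = mpow ω (3 / 2) := by
    conv_lhs => rw [← mpow_one hω.isHermitian]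
    rw [mpow_mul_mpow_of_nonneg hω (by norm_num) zero_le_one]
    norm_num
  have hcross : traceR (sᴴ * (s * G * s)) = traceR (mpow ω (3 / 2) * G) := by
    rw [hs, ← hsω, ← hss, ← mul_assoc, traceR_mul_comm]
    simp only [mul_assoc]
  have hquad : snorm 2 (s * G * s) ^ 2 = traceR (ω * G * (ω * G)) := by
    rw [snorm_two_sq, conjTranspose_mul, conjTranspose_mul, hs, hG, ← hss, ← mul_assoc,
      traceR_mul_comm]
    simp only [mul_assoc]
  have hs2 : snorm 2 s ^ 2 = traceR ω := by rw [snorm_two_sq, hs, hss]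
  have hAMGM := two_mul_traceR_conjTranspose_mul_le s (s * G * s)
  rw [hcross, hs2, hquad] at hAMGM
  have hKlein : _ ≤ 2 * (traceR (mpow ω (3 / 2) * G) - traceR ω) :=
    traceR_mul_mlog_sub_mul_mlog_le hω hξ
  linarith

end RelativeEntropy

section TraceNorm

lemma exists_snorm_one_eq_traceR_mul {h : Mat n} (hh : h.IsHermitian) :
    ∃ S : Mat n, S.IsHermitian ∧ S * S = 1 ∧ snorm 1 h = traceR (h * S) := by
  have hid : cfc (fun x : ℝ => x) h = h := cfc_id' ℝ h hh
  let sgn : ℝ → ℝ := fun x => if x < 0 then -1 else 1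
  have hsgn (x : ℝ) : sgn x * sgn x = 1 := by
    dsimp only [sgn]
    split_ifs <;> norm_num
  have habs (x : ℝ) : x * sgn x = (x * x) ^ (1 / 2 : ℝ) := by
    rw [← Real.sqrt_eq_rpow, Real.sqrt_mul_self_eq_abs]
    dsimp only [sgn]
    split_ifs with hx
    · rw [abs_of_neg hx, mul_neg_one]
    · rw [abs_of_nonneg (not_lt.1 hx), mul_one]
  refine ⟨cfc sgn h, isHermitian_cfc _ _, ?_, ?_⟩
  · simp only [cfc_mul_cfc, hsgn]
    exact cfc_const_one ℝ h hh
  · have hpow : mpow (hᴴ * h) (1 / 2) = h * cfc sgn h := by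
      calc mpow (hᴴ * h) (1 / 2) = mpow (cfc (fun x : ℝ => x * x) h) (1 / 2) := by
            rw [← cfc_mul_cfc, hid, hh]
        _ = cfc (fun x : ℝ => (x * x) ^ (1 / 2 : ℝ)) h :=
            (cfc_comp' (fun x : ℝ => x ^ (1 / 2 : ℝ)) _ h
              ((h.finite_real_spectrum.image _).continuousOn _)
              (continuousOn_real_spectrum h _) hh).symm
        _ = cfc (fun x : ℝ => x) h * cfc sgn h := by simp only [cfc_mul_cfc, habs]
        _ = h * cfc sgn h := by rw [hid]
    rw [snorm, hpow, div_self one_ne_zero, Real.rpow_one]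

lemma posSemidef_one_sub_of_mul_self_eq_one {S : Mat n} (hS : S.IsHermitian) (hSS : S * S = 1) :
    (1 - S).PosSemidef := by
  have hsq : 1 - S = (1 / 2 : ℝ) • ((1 - S)ᴴ * (1 - S)) := by
    rw [conjTranspose_sub, conjTranspose_one, hS.eq]
    simp only [Matrix.mul_sub, Matrix.sub_mul, hSS, mul_one, one_mul]
    module
  rw [hsq]
  exact (posSemidef_conjTranspose_mul_self _).smul (by norm_num)

lemma snorm_one_sub_le {a b : Mat n} (ha : a.PosSemidef) (hb : b.PosSemidef) :
    snorm 1 (a - b) ≤ traceR a + traceR b := by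
  obtain ⟨S, hS, hSS, hnorm⟩ := exists_snorm_one_eq_traceR_mul (ha.isHermitian.sub hb.isHermitian)
  have h₁ := traceR_mul_nonneg ha (posSemidef_one_sub_of_mul_self_eq_one hS hSS)
  have h₂ := traceR_mul_nonneg hb
    (posSemidef_one_sub_of_mul_self_eq_one hS.neg (by rw [neg_mul_neg, hSS]))
  rw [Matrix.mul_sub, mul_one, traceR_sub] at h₁
  rw [sub_neg_eq_add, Matrix.mul_add, mul_one, traceR_add] at h₂
  rw [hnorm, Matrix.sub_mul, traceR_sub]
  linarith

lemma snorm_two_conj_le_one {v S : Mat n} (hv : v.IsHermitian) (hS : S.IsHermitian)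
    (hSS : S * S = 1) (htr : traceR (v * v * (v * v)) = 1) : snorm 2 (v * S * v) ≤ 1 := by
  have hvv : (v * v)ᴴ = v * v := by rw [conjTranspose_mul, hv.eq]
  have hleft : snorm 2 (S * (v * v)) = 1 := by
    rw [← pow_eq_one_iff_of_nonneg (snorm_two_nonneg _) two_ne_zero, snorm_two_sq,
      conjTranspose_mul, hvv, hS.eq, mul_assoc, ← mul_assoc S S, hSS, one_mul, htr]
  have hright : snorm 2 (v * v * S) = 1 := by
    rw [← snorm_two_conjTranspose, conjTranspose_mul, hvv, hS.eq, hleft]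
  have hsq : snorm 2 (v * S * v) ^ 2 = traceR ((S * (v * v))ᴴ * (v * v * S)) := by
    rw [snorm_two_sq, conjTranspose_mul, conjTranspose_mul, conjTranspose_mul, hvv, hv.eq, hS.eq,
      mul_assoc v, traceR_mul_comm, mul_assoc (v * v), traceR_mul_comm (v * v)]
    simp only [mul_assoc]
  rw [← sq_le_one_iff₀ (snorm_two_nonneg _), hsq]
  exact (traceR_conjTranspose_mul_le _ _).trans_eq (by rw [hleft, hright, one_mul])

lemma sandwich_two (ρ σ : Mat n) :
    sandwich 2 ρ σ = mpow σ (-1 / 4) * ρ * mpow σ (-1 / 4) := by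
  norm_num [sandwich]

lemma isHermitian_sandwich_two {ρ : Mat n} (hρ : ρ.IsHermitian) (σ : Mat n) :
    (sandwich 2 ρ σ).IsHermitian := by
  rw [IsHermitian, sandwich_two, conjTranspose_mul, conjTranspose_mul, hρ.eq,
    (isHermitian_mpow σ _).eq, mul_assoc]

lemma mpow_mul_sandwich_two_mul_mpow {σ : Mat n} (hσ : σ.PosDef) (ρ : Mat n) :
    mpow σ (1 / 4) * sandwich 2 ρ σ * mpow σ (1 / 4) = ρ := by
  have hvw : mpow σ (1 / 4) * mpow σ (-1 / 4) = 1 := by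
    rw [mpow_mul_mpow hσ, ← mpow_zero hσ.isHermitian]
    norm_num
  have hwv : mpow σ (-1 / 4) * mpow σ (1 / 4) = 1 := by
    rw [mpow_mul_mpow hσ, ← mpow_zero hσ.isHermitian]
    norm_num
  calc mpow σ (1 / 4) * sandwich 2 ρ σ * mpow σ (1 / 4)
      = mpow σ (1 / 4) * mpow σ (-1 / 4) * ρ * (mpow σ (-1 / 4) * mpow σ (1 / 4)) := by
        rw [sandwich_two]
        simp only [mul_assoc]
    _ = ρ := by rw [hvw, hwv, one_mul, mul_one]

lemma traceR_mul_le_snorm_two_sandwich {σ : Mat n} (hσ : σ.PosDef) (htr : traceR σ = 1)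
    {h S : Mat n} (hh : h.IsHermitian) (hS : S.IsHermitian) (hSS : S * S = 1) :
    traceR (h * S) ≤ snorm 2 (sandwich 2 h σ) := by
  let v := mpow σ (1 / 4)
  have hv : v.IsHermitian := isHermitian_mpow _ _
  have hvv : traceR (v * v * (v * v)) = 1 := by
    rw [mpow_mul_mpow hσ, mpow_mul_mpow hσ]
    norm_num [mpow_one hσ.isHermitian, htr]
  calc traceR (h * S) = traceR (v * sandwich 2 h σ * v * S) := by
        rw [mpow_mul_sandwich_two_mul_mpow hσ]
    _ = traceR ((sandwich 2 h σ)ᴴ * (v * S * v)) := by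
        rw [(isHermitian_sandwich_two hh σ).eq, mul_assoc v, mul_assoc v, traceR_mul_comm]
        simp only [mul_assoc]
    _ ≤ snorm 2 (sandwich 2 h σ) * snorm 2 (v * S * v) := traceR_conjTranspose_mul_le _ _
    _ ≤ snorm 2 (sandwich 2 h σ) :=
        mul_le_of_le_one_right (snorm_two_nonneg _) (snorm_two_conj_le_one hv hS hSS hvv)

lemma snorm_one_le_snorm_two_sandwich {σ : Mat n} (hσ : σ.PosDef) (htr : traceR σ = 1) {h : Mat n}
    (hh : h.IsHermitian) : snorm 1 h ≤ snorm 2 (sandwich 2 h σ) := by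
  obtain ⟨S, hS, hSS, hnorm⟩ := exists_snorm_one_eq_traceR_mul hh
  exact hnorm.trans_le (traceR_mul_le_snorm_two_sandwich hσ htr hh hS hSS)

lemma traceR_le_snorm_two_sandwich {σ : Mat n} (hσ : σ.PosDef) (htr : traceR σ = 1) {h : Mat n}
    (hh : h.IsHermitian) : traceR h ≤ snorm 2 (sandwich 2 h σ) := by
  simpa only [mul_one] using
    traceR_mul_le_snorm_two_sandwich hσ htr hh isHermitian_one (one_mul 1)

end TraceNorm

section ConditionalExpectation

variable {B : StarSubalgebra ℂ (Mat n)} {E : Mat n →ₗ[ℂ] Mat n} {b x z : Mat n}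

lemma IsCondExp.apply_eq (hE : IsCondExp (B : Set (Mat n)) E) (hz : z ∈ B)
    (h : ∀ y ∈ B, (zᴴ * y).trace = (xᴴ * y).trace) : E x = z := by
  have hmem : E x - z ∈ B := sub_mem (hE.1 x) hz
  rw [← sub_eq_zero, ← trace_conjTranspose_mul_self_eq_zero_iff, conjTranspose_sub, Matrix.sub_mul,
    trace_sub, hE.2.2 x _ hmem, h _ hmem, sub_self]

lemma IsCondExp.map_conjTranspose (hE : IsCondExp (B : Set (Mat n)) E) (x : Mat n) :
    E xᴴ = (E x)ᴴ := by
  refine hE.apply_eq (star_mem (hE.1 x)) fun y hy => ?_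
  have h := congrArg star (hE.2.2 x yᴴ (star_mem hy))
  rw [← trace_conjTranspose, ← trace_conjTranspose, conjTranspose_mul, conjTranspose_mul] at h
  simpa only [conjTranspose_conjTranspose, trace_mul_comm y] using h

lemma IsCondExp.map_mul_left (hE : IsCondExp (B : Set (Mat n)) E) (hb : b ∈ B) (x : Mat n) :
    E (b * x) = b * E x := by
  refine hE.apply_eq (mul_mem hb (hE.1 x)) fun y hy => ?_
  rw [conjTranspose_mul, conjTranspose_mul, mul_assoc, mul_assoc]
  exact hE.2.2 x _ (mul_mem (star_mem hb) hy)

lemma IsCondExp.map_mul_right (hE : IsCondExp (B : Set (Mat n)) E) (hb : b ∈ B) (x : Mat n) :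
    E (x * b) = E x * b := by
  rw [← conjTranspose_inj, ← hE.map_conjTranspose, conjTranspose_mul, conjTranspose_mul,
    ← hE.map_conjTranspose]
  exact hE.map_mul_left (star_mem hb) _

lemma IsCondExp.trace_apply (hE : IsCondExp (B : Set (Mat n)) E) (x : Mat n) :
    (E x).trace = x.trace := by
  have h := hE.2.2 xᴴ 1 (one_mem B)
  rwa [hE.map_conjTranspose, conjTranspose_conjTranspose, conjTranspose_conjTranspose, mul_one,
    mul_one] at h

lemma IsCondExp.trace_mul_apply (hE : IsCondExp (B : Set (Mat n)) E) (hb : b ∈ B) (x : Mat n) :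
    (b * E x).trace = (b * x).trace := by
  rw [← hE.map_mul_left hb, hE.trace_apply]

/- Test `x ≥ 0` against the negative part `c` of `E x`, which lies in `B`:
`0 ≤ Tr (c x) = Tr (c E x) = -Tr (c * c)`. -/
open scoped MatrixOrder in
lemma IsCondExp.posSemidef_apply (hE : IsCondExp (B : Set (Mat n)) E) (hx : x.PosSemidef) :
    (E x).PosSemidef := by
  have hEx : (E x).IsHermitian := by rw [IsHermitian, ← hE.map_conjTranspose, hx.isHermitian.eq]
  have hc : (E x)⁻.PosSemidef := (CFC.negPart_nonneg (E x)).posSemidef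
  have hcB : (E x)⁻ ∈ B := by
    rw [CFC.negPart_def, cfcₙ_eq_cfc]
    exact cfc_mem B hEx (hE.1 x) _
  have hcE : (E x)⁻ * E x = -((E x)⁻ᴴ * (E x)⁻) := by
    conv_lhs => rhs; rw [← CFC.posPart_sub_negPart (E x) hEx]
    rw [Matrix.mul_sub, CFC.negPart_mul_posPart, zero_sub, hc.isHermitian.eq]
  have htr : traceR ((E x)⁻ * E x) = traceR ((E x)⁻ * x) :=
    congrArg Complex.re (hE.trace_mul_apply hcB x)
  have hcx := traceR_mul_nonneg hc hx
  rw [← htr, hcE, traceR_neg, ← snorm_two_sq, neg_nonneg] at hcx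
  have hc0 : (E x)⁻ = 0 :=
    snorm_two_eq_zero_iff.1 (pow_eq_zero_iff two_ne_zero |>.1 (hcx.antisymm (sq_nonneg _)))
  exact ((CFC.negPart_eq_zero_iff (E x) hEx).1 hc0).posSemidef

end ConditionalExpectation

section Decoherence

/-- A unital positive trace-preserving map `T` that is multiplicative over the algebra `B`, commutes
with the conditional expectation `E` onto `B`, and contracts the orthogonal complement of `B` by the
factor `μ` in Hilbert–Schmidt norm. This is what the convergence estimates need to know about the
channel of the theorem, and it passes to powers and to amplifications. -/
structure IsDecoherence (B : StarSubalgebra ℂ (Mat n)) (T E : Mat n →ₗ[ℂ] Mat n) (μ : ℝ) :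
    Prop where
  map_one : T 1 = 1
  map_posSemidef : ∀ x, x.PosSemidef → (T x).PosSemidef
  trace_map : ∀ x, (T x).trace = x.trace
  map_mul_left : ∀ b ∈ B, ∀ x, T (b * x) = T b * T x
  map_mul_right : ∀ b ∈ B, ∀ x, T (x * b) = T x * T b
  map_mem : ∀ b ∈ B, T b ∈ B
  condExp : IsCondExp (B : Set (Mat n)) E
  condExp_map : ∀ x, E (T x) = T (E x)
  rate_nonneg : 0 ≤ μ
  contract : ∀ x, snorm 2 (T (x - E x)) ≤ μ * snorm 2 x

variable {B : StarSubalgebra ℂ (Mat n)} {T T' E : Mat n →ₗ[ℂ] Mat n} {μ ν : ℝ}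

lemma IsDecoherence.comp (h : IsDecoherence B T E μ) (h' : IsDecoherence B T' E ν) :
    IsDecoherence B (T ∘ₗ T') E (μ * ν) where
  map_one := by rw [LinearMap.comp_apply, h'.map_one, h.map_one]
  map_posSemidef x hx := h.map_posSemidef _ (h'.map_posSemidef x hx)
  trace_map x := (h.trace_map _).trans (h'.trace_map x)
  map_mul_left b hb x := by
    simp only [LinearMap.comp_apply, h'.map_mul_left b hb, h.map_mul_left _ (h'.map_mem b hb)]
  map_mul_right b hb x := by
    simp only [LinearMap.comp_apply, h'.map_mul_right b hb, h.map_mul_right _ (h'.map_mem b hb)]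
  map_mem b hb := h.map_mem _ (h'.map_mem b hb)
  condExp := h.condExp
  condExp_map x := by simp only [LinearMap.comp_apply, h.condExp_map, h'.condExp_map]
  rate_nonneg := mul_nonneg h.rate_nonneg h'.rate_nonneg
  contract x := by
    have hE0 : E (T' (x - E x)) = 0 := by
      rw [h'.condExp_map, map_sub, h.condExp.2.1 _ (h.condExp.1 x), sub_self, map_zero]
    have hT := h.contract (T' (x - E x))
    rw [hE0, sub_zero] at hT
    rw [mul_assoc]
    exact hT.trans (mul_le_mul_of_nonneg_left (h'.contract x) h.rate_nonneg)

lemma IsDecoherence.pow (h : IsDecoherence B T E μ) {k : ℕ} (hk : 1 ≤ k) :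
    IsDecoherence B (T ^ k) E (μ ^ k) := by
  induction k, hk using Nat.le_induction with
  | base => simpa only [pow_one] using h
  | succ k _ ih =>
    rw [pow_succ' T, pow_succ' μ]
    exact h.comp ih

lemma IsDecoherence.map_cfc (h : IsDecoherence B T E μ) {σ : Mat n} (hσ : σ.PosSemidef)
    (hσB : σ ∈ B) (f : ℝ → ℝ) : T (cfc f σ) = cfc f (T σ) :=
  map_cfc_of_mul h.map_one h.map_mul_left hσ.isHermitian (h.map_posSemidef σ hσ).isHermitian hσB f

lemma IsDecoherence.map_posDef (h : IsDecoherence B T E μ) {σ : Mat n} (hσ : σ.PosDef)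
    (hσB : σ ∈ B) : (T σ).PosDef := by
  refine (h.map_posSemidef σ hσ.posSemidef).posDef_iff_isUnit.2 (.of_mul_eq_one (T σ⁻¹) ?_)
  rw [← h.map_mul_left σ hσB, mul_nonsing_inv σ ((isUnit_iff_isUnit_det σ).1 hσ.isUnit), h.map_one]

lemma IsDecoherence.isDensity_map (h : IsDecoherence B T E μ) {ρ : Mat n} (hρ : IsDensity ρ) :
    IsDensity (T ρ) :=
  ⟨h.map_posSemidef ρ hρ.1, (h.trace_map ρ).trans hρ.2⟩

lemma IsCondExp.isDensity_apply {ρ : Mat n} (hE : IsCondExp (B : Set (Mat n)) E)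
    (hρ : IsDensity ρ) : IsDensity (E ρ) :=
  ⟨hE.posSemidef_apply hρ.1, (hE.trace_apply ρ).trans hρ.2⟩

/- Since `T` is multiplicative over `B`, the sandwich of `T (ρ - E ρ)` by `T σ` is the image under
`T` of the sandwich of `ρ - E ρ` by `σ`, which is again orthogonal to `B`. -/
lemma IsDecoherence.snorm_two_sandwich_map_sub_le (h : IsDecoherence B T E μ) {σ : Mat n}
    (hσ : σ.PosSemidef) (hσB : σ ∈ B) (ρ : Mat n) :
    snorm 2 (sandwich 2 (T ρ - E (T ρ)) (T σ)) ≤ μ * snorm 2 (sandwich 2 ρ σ) := by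
  have hw : mpow σ (-1 / 4) ∈ B := cfc_mem B hσ.isHermitian hσB _
  have hT : sandwich 2 (T ρ - E (T ρ)) (T σ) = T (sandwich 2 ρ σ - E (sandwich 2 ρ σ)) := by
    have hTw : mpow (T σ) (-1 / 4) = T (mpow σ (-1 / 4)) := (h.map_cfc hσ hσB _).symm
    rw [sandwich_two, sandwich_two, h.condExp.map_mul_right hw, h.condExp.map_mul_left hw,
      ← Matrix.sub_mul, ← Matrix.mul_sub, h.map_mul_right _ hw, h.map_mul_left _ hw, hTw,
      h.condExp_map, map_sub]
  rw [hT]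
  exact h.contract _

end Decoherence

section Amplification

variable {k : Type*} [Fintype k] [DecidableEq k]

/-- A matrix over `k × n`, read as a matrix of blocks in `Mat n`, so that `ampFun k Φ` is entrywise
application of `Φ`. -/
abbrev blocks : Mat (k × n) ≃ₐ[ℂ] Matrix k k (Mat n) := (compAlgEquiv k n ℂ ℂ).symm

lemma blocks_ampFun (Φ : Mat n →ₗ[ℂ] Mat n) (X : Mat (k × n)) (i j : k) :
    blocks (ampFun k Φ X) i j = Φ (blocks X i j) := rfl

lemma blocks_conjTranspose (X : Mat (k × n)) (i j : k) : blocks Xᴴ i j = (blocks X j i)ᴴ := rfl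

lemma blocks_mul_apply (X Y : Mat (k × n)) (i j : k) :
    blocks (X * Y) i j = ∑ l, blocks X i l * blocks Y l j := by
  rw [map_mul, mul_apply]

lemma trace_eq_sum_blocks (X : Mat (k × n)) : X.trace = ∑ i, (blocks X i i).trace :=
  Fintype.sum_prod_type _

lemma snorm_two_sq_eq_sum_blocks (X : Mat (k × n)) :
    snorm 2 X ^ 2 = ∑ j, ∑ i, snorm 2 (blocks X i j) ^ 2 := by
  simp only [snorm_two_sq, traceR, trace_eq_sum_blocks (Xᴴ * X), blocks_mul_apply,
    blocks_conjTranspose, trace_sum, Complex.re_sum]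

open scoped Kronecker in
lemma eq_sum_single_kronecker_blocks (X : Mat (k × n)) :
    X = ∑ i, ∑ j, single i j (1 : ℂ) ⊗ₖ blocks X i j := by
  ext ⟨a, s⟩ ⟨b, t⟩
  simp [Matrix.sum_apply, single_apply, ite_and]

variable (k) in
/-- The amplification `id ⊗ Φ` as a linear map. -/
def ampLin (Φ : Mat n →ₗ[ℂ] Mat n) : Mat (k × n) →ₗ[ℂ] Mat (k × n) where
  toFun := ampFun k Φ
  map_add' X Y := blocks.injective <| by ext1; simp only [blocks_ampFun, map_add, Matrix.add_apply]
  map_smul' c X := blocks.injective <| by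
    ext1; simp only [blocks_ampFun, map_smul, Matrix.smul_apply, RingHom.id_apply]

variable (k) in
/-- The amplification `M_k ⊗ B` of a *-subalgebra `B`: all blocks lie in `B`. -/
def ampAlg (B : StarSubalgebra ℂ (Mat n)) : StarSubalgebra ℂ (Mat (k × n)) where
  carrier := {X | ∀ i j, blocks X i j ∈ B}
  mul_mem' hX hY i j := by
    rw [blocks_mul_apply]
    exact sum_mem fun l _ => mul_mem (hX i l) (hY l j)
  add_mem' hX hY i j := by
    rw [map_add, Matrix.add_apply]
    exact add_mem (hX i j) (hY i j)
  algebraMap_mem' c i j := by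
    rw [AlgEquiv.commutes, algebraMap_matrix_apply]
    split_ifs
    exacts [algebraMap_mem B c, zero_mem B]
  star_mem' hX i j := star_mem (hX j i)

variable {B : StarSubalgebra ℂ (Mat n)} {T E : Mat n →ₗ[ℂ] Mat n} {μ : ℝ}

open scoped Kronecker in
variable (k B) in
lemma coe_ampAlg : (ampAlg k B : Set (Mat (k × n))) = tensorSpan Set.univ (B : Set (Mat n)) := by
  apply Set.Subset.antisymm
  · intro X hX
    rw [eq_sum_single_kronecker_blocks X]
    exact Submodule.sum_mem _ fun i _ => Submodule.sum_mem _ fun j _ =>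
      Submodule.subset_span ⟨_, Set.mem_univ _, _, hX i j, rfl⟩
  · have hle : Submodule.span ℂ {z | ∃ x ∈ (Set.univ : Set (Mat k)), ∃ y ∈ (B : Set (Mat n)),
        z = x ⊗ₖ y} ≤ Subalgebra.toSubmodule (ampAlg k B).toSubalgebra := by
      rw [Submodule.span_le]
      rintro _ ⟨x, -, y, hy, rfl⟩ i j
      exact B.smul_mem hy (x i j)
    exact hle

variable (k) in
lemma IsCondExp.amp (hE : IsCondExp (B : Set (Mat n)) E) :
    IsCondExp (ampAlg k B : Set (Mat (k × n))) (ampLin k E) := by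
  refine ⟨fun X i j => hE.1 (blocks X i j), fun X hX => blocks.injective ?_, fun X Y hY => ?_⟩
  · ext1 i j
    exact hE.2.1 _ (hX i j)
  · simp only [trace_eq_sum_blocks, blocks_mul_apply, trace_sum]
    exact Finset.sum_congr rfl fun i _ => Finset.sum_congr rfl fun l _ =>
      hE.2.2 (blocks X l i) (blocks Y l i) (hY l i)

lemma IsDecoherence.amp (h : IsDecoherence B T E μ)
    (hT : ∀ X : Mat (k × n), X.PosSemidef → (ampFun k T X).PosSemidef) :
    IsDecoherence (ampAlg k B) (ampLin k T) (ampLin k E) μ where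
  map_one := blocks.injective <| by
    ext1 i j
    change T (blocks 1 i j) = blocks 1 i j
    rw [_root_.map_one, one_apply]
    split_ifs
    exacts [h.map_one, map_zero T]
  map_posSemidef := hT
  trace_map X := by
    simp only [trace_eq_sum_blocks]
    exact Finset.sum_congr rfl fun i _ => h.trace_map (blocks X i i)
  map_mul_left b hb X := blocks.injective <| by
    ext1 i j
    change T (blocks (b * X) i j) = _
    rw [blocks_mul_apply, blocks_mul_apply, map_sum]
    exact Finset.sum_congr rfl fun l _ => h.map_mul_left _ (hb i l) _
  map_mul_right b hb X := blocks.injective <| by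
    ext1 i j
    change T (blocks (X * b) i j) = _
    rw [blocks_mul_apply, blocks_mul_apply, map_sum]
    exact Finset.sum_congr rfl fun l _ => h.map_mul_right _ (hb l j) _
  map_mem b hb i j := h.map_mem _ (hb i j)
  condExp := h.condExp.amp k
  condExp_map X := blocks.injective <| by
    ext1 i j
    exact h.condExp_map (blocks X i j)
  rate_nonneg := h.rate_nonneg
  contract X := by
    refine le_of_sq_le_sq ?_ (mul_nonneg h.rate_nonneg (snorm_two_nonneg X))
    rw [mul_pow, snorm_two_sq_eq_sum_blocks, snorm_two_sq_eq_sum_blocks, Finset.mul_sum]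
    refine Finset.sum_le_sum fun j _ => ?_
    rw [Finset.mul_sum]
    refine Finset.sum_le_sum fun i _ => ?_
    rw [← mul_pow]
    exact pow_le_pow_left₀ (snorm_two_nonneg _) (h.contract (blocks X i j)) 2

end Amplification

section MultiplicativeDomain

variable {T E : Mat n →ₗ[ℂ] Mat n} {a b : Mat n}

lemma IsCP.posSemidef_fromBlocks (hT : IsCP T) (x : Mat n) :
    (fromBlocks (T 1) (T x) (T xᴴ) (T (xᴴ * x))).PosSemidef := by
  let v : Fin 2 → Mat n := ![1, x]
  let V : Matrix n (Fin 2 × n) ℂ := of fun r a => v a.1 r a.2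
  have h := (hT 2 _ (posSemidef_conjTranspose_mul_self V)).submatrix
    (Sum.elim (Prod.mk 0) (Prod.mk 1) : n ⊕ n → Fin 2 × n)
  have hblock (i j : Fin 2) (s t : n) :
      ampFun (Fin 2) T (Vᴴ * V) (i, s) (j, t) = T ((v i)ᴴ * v j) s t := rfl
  convert h using 1
  ext (s | s) (t | t) <;> simp [hblock, v]

lemma IsCP.map_conjTranspose (hT : IsCP T) (x : Mat n) : T xᴴ = (T x)ᴴ :=
  (isHermitian_fromBlocks_iff.1 (hT.posSemidef_fromBlocks x).isHermitian).2.1.symm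

open scoped MatrixOrder in
lemma IsCP.posSemidef_apply (hT : IsCP T) {x : Mat n} (hx : x.PosSemidef) :
    (T x).PosSemidef := by
  obtain ⟨C, rfl⟩ := CStarAlgebra.nonneg_iff_eq_star_mul_self.1 hx.nonneg
  exact (hT.posSemidef_fromBlocks C).submatrix Sum.inr

lemma IsCP.posSemidef_map_conjTranspose_mul_self_sub (hT : IsCP T) (hT1 : T 1 = 1) (x : Mat n) :
    (T (xᴴ * x) - (T x)ᴴ * T x).PosSemidef := by
  have h := hT.posSemidef_fromBlocks x
  let := invertibleOne (α := Mat n)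
  rw [hT.map_conjTranspose, hT1, PosDef.one.fromBlocks₁₁] at h
  simpa only [inv_one, mul_one] using h

open scoped ComplexConjugate in
lemma eq_zero_of_forall_posSemidef {A F : Mat n}
    (h : ∀ c : ℂ, (star c • A + c • Aᴴ + F).PosSemidef) : A = 0 := by
  have hquad (v : n → ℂ) : star v ⬝ᵥ A *ᵥ v = 0 := by
    let z := star v ⬝ᵥ A *ᵥ v
    let f := star v ⬝ᵥ F *ᵥ v
    have hz : star v ⬝ᵥ Aᴴ *ᵥ v = star z := by
      rw [star_dotProduct, star_mulVec, conjTranspose_conjTranspose, ← dotProduct_mulVec]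
    have hline (t : ℝ) : 0 ≤ 2 * t * Complex.normSq z + f.re := by
      have ht := (Complex.le_def.1 ((h (t * z)).dotProduct_mulVec_nonneg v)).1
      simp only [add_mulVec, smul_mulVec, dotProduct_add, dotProduct_smul, hz] at ht
      calc (0 : ℝ) ≤ _ := ht
        _ = 2 * t * Complex.normSq z + f.re := by
          simp [z, f, Complex.normSq_apply]
          ring
    by_contra hne
    have hpos : 0 < Complex.normSq z := Complex.normSq_pos.2 hne
    have hneg := hline (-(f.re + 1) / (2 * Complex.normSq z))
    field_simp at hneg
    linarith
  refine (toEuclideanLin (𝕜 := ℂ)).map_eq_zero_iff.1 ((inner_map_self_eq_zero _).1 fun v => ?_)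
  rw [← inner_conj_symm, EuclideanSpace.inner_eq_star_dotProduct, dotProduct_comm]
  simpa using congrArg conj (hquad v)

lemma IsCP.map_conjTranspose_mul_of_eq (hT : IsCP T) (hT1 : T 1 = 1)
    (ha : T (aᴴ * a) = T aᴴ * T a) (x : Mat n) : T (aᴴ * x) = T aᴴ * T x := by
  rw [← sub_eq_zero]
  refine eq_zero_of_forall_posSemidef (F := T (xᴴ * x) - (T x)ᴴ * T x) fun c => ?_
  convert hT.posSemidef_map_conjTranspose_mul_self_sub hT1 (c • a + x) using 1
  simp only [conjTranspose_add, conjTranspose_sub, conjTranspose_smul, conjTranspose_mul,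
    ← hT.map_conjTranspose, conjTranspose_conjTranspose, Matrix.add_mul, Matrix.mul_add,
    Matrix.smul_mul, Matrix.mul_smul, map_add, map_smul, ha]
  module

lemma IsCP.mem_multDomain_iff (hT : IsCP T) (hT1 : T 1 = 1) :
    a ∈ multDomain T ↔ ∀ x, T (a * x) = T a * T x ∧ T (x * a) = T x * T a := by
  refine ⟨fun ⟨hl, hr⟩ x => ⟨?_, ?_⟩, fun h => ⟨(h _).2, (h _).1⟩⟩
  · have hr' : T (aᴴᴴ * aᴴ) = T aᴴᴴ * T aᴴ := by rwa [conjTranspose_conjTranspose]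
    simpa only [conjTranspose_conjTranspose] using hT.map_conjTranspose_mul_of_eq hT1 hr' x
  · rw [← conjTranspose_inj, conjTranspose_mul, ← hT.map_conjTranspose, ← hT.map_conjTranspose,
      ← hT.map_conjTranspose, conjTranspose_mul]
    exact hT.map_conjTranspose_mul_of_eq hT1 hl xᴴ

/-- The multiplicative domain of a unital completely positive map, as a *-subalgebra. -/
def multDomainAlg (hT : IsCP T) (hT1 : T 1 = 1) : StarSubalgebra ℂ (Mat n) where
  carrier := multDomain T
  mul_mem' {a b} ha hb := by
    rw [hT.mem_multDomain_iff hT1] at *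
    exact fun x => ⟨by rw [mul_assoc, (ha _).1, (hb x).1, (ha b).1, mul_assoc],
      by rw [← mul_assoc, (hb _).2, (ha x).2, (hb a).2, mul_assoc]⟩
  add_mem' {a b} ha hb := by
    rw [hT.mem_multDomain_iff hT1] at *
    exact fun x => ⟨by rw [Matrix.add_mul, map_add, (ha x).1, (hb x).1, map_add, Matrix.add_mul],
      by rw [Matrix.mul_add, map_add, (ha x).2, (hb x).2, map_add, Matrix.mul_add]⟩
  algebraMap_mem' c := by
    rw [hT.mem_multDomain_iff hT1, Algebra.algebraMap_eq_smul_one, map_smul, hT1]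
    exact fun x => ⟨by rw [smul_one_mul, smul_one_mul, map_smul],
      by rw [mul_smul_one, mul_smul_one, map_smul]⟩
  star_mem' {a} ha := by
    rw [star_eq_conjTranspose]
    exact ⟨by rw [conjTranspose_conjTranspose]; exact ha.2,
      by rw [conjTranspose_conjTranspose]; exact ha.1⟩

lemma trace_map_of_symm (hT1 : T 1 = 1)
    (hsymm : ∀ x y : Mat n, (xᴴ * T y).trace = ((T x)ᴴ * y).trace) (x : Mat n) :
    (T x).trace = x.trace := by
  simpa only [hT1, conjTranspose_one, one_mul] using hsymm 1 x

lemma IsCP.map_map_mul_of_symm (hT : IsCP T) (hT1 : T 1 = 1)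
    (hsymm : ∀ x y : Mat n, (xᴴ * T y).trace = ((T x)ᴴ * y).trace) (hb : b ∈ multDomain T)
    (x : Mat n) : T (T b * x) = b * T x := by
  refine eq_of_forall_trace_conjTranspose_mul_eq fun y => ?_
  calc (yᴴ * T (T b * x)).trace = (T (yᴴ * b) * x).trace := by
        rw [hsymm, ← hT.map_conjTranspose, ((hT.mem_multDomain_iff hT1).1 hb _).2, mul_assoc]
    _ = ((bᴴ * y)ᴴ * T x).trace := by
        rw [hsymm, ← hT.map_conjTranspose, conjTranspose_mul, conjTranspose_conjTranspose]
    _ = (yᴴ * (b * T x)).trace := by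
        rw [conjTranspose_mul, conjTranspose_conjTranspose, mul_assoc]

lemma IsCP.map_map_of_symm (hT : IsCP T) (hT1 : T 1 = 1)
    (hsymm : ∀ x y : Mat n, (xᴴ * T y).trace = ((T x)ᴴ * y).trace) (hb : b ∈ multDomain T) :
    T (T b) = b := by
  simpa only [mul_one, hT1] using hT.map_map_mul_of_symm hT1 hsymm hb 1

lemma IsCP.map_mem_multDomain_of_symm (hT : IsCP T) (hT1 : T 1 = 1)
    (hsymm : ∀ x y : Mat n, (xᴴ * T y).trace = ((T x)ᴴ * y).trace) (hb : b ∈ multDomain T) :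
    T b ∈ multDomain T := by
  have hb' : bᴴ ∈ multDomain T := star_mem (s := multDomainAlg hT hT1) hb
  refine (hT.mem_multDomain_iff hT1).2 fun x => ⟨?_, ?_⟩
  · rw [hT.map_map_mul_of_symm hT1 hsymm hb, hT.map_map_of_symm hT1 hsymm hb]
  · have h := hT.map_map_mul_of_symm hT1 hsymm hb' xᴴ
    rw [hT.map_conjTranspose, ← conjTranspose_mul, hT.map_conjTranspose, hT.map_conjTranspose,
      ← conjTranspose_mul, conjTranspose_inj] at h
    rw [h, hT.map_map_of_symm hT1 hsymm hb]

lemma IsCP.isDecoherence_of_symm (hT : IsCP T) (hT1 : T 1 = 1)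
    (hsymm : ∀ x y : Mat n, (xᴴ * T y).trace = ((T x)ᴴ * y).trace)
    (hE : IsCondExp (multDomain T) E) :
    IsDecoherence (multDomainAlg hT hT1) T E (norm22 (T ∘ₗ (LinearMap.id - E))) where
  map_one := hT1
  map_posSemidef _ hx := hT.posSemidef_apply hx
  trace_map := trace_map_of_symm hT1 hsymm
  map_mul_left _ hb x := ((hT.mem_multDomain_iff hT1).1 hb x).1
  map_mul_right _ hb x := ((hT.mem_multDomain_iff hT1).1 hb x).2
  map_mem _ hb := hT.map_mem_multDomain_of_symm hT1 hsymm hb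
  condExp := hE
  condExp_map x := by
    have hE' : IsCondExp (multDomainAlg hT hT1 : Set (Mat n)) E := hE
    refine hE'.apply_eq (hT.map_mem_multDomain_of_symm hT1 hsymm (hE.1 x)) fun y hy => ?_
    rw [← hsymm, ← hsymm]
    exact hE.2.2 x _ (hT.map_mem_multDomain_of_symm hT1 hsymm hy)
  rate_nonneg := norm22_nonneg _
  contract x := by
    have h := snorm_two_apply_le_norm22_mul (T ∘ₗ (LinearMap.id - E)) x
    rwa [LinearMap.comp_apply, LinearMap.sub_apply, LinearMap.id_apply] at h

end MultiplicativeDomain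

section EntropyBound

variable {B : StarSubalgebra ℂ (Mat n)} {E : Mat n →ₗ[ℂ] Mat n} {ω τ a h G P X : Mat n}

lemma mlog_smul (hX : X.PosDef) {c : ℝ} (hc : 0 < c) :
    mlog (c • X) = Real.log c • (1 : Mat n) + mlog X := by
  have hconst : cfc (fun _ : ℝ => Real.log c) X = Real.log c • (1 : Mat n) :=
    (cfc_const (Real.log c) X hX.isHermitian).trans (Algebra.algebraMap_eq_smul_one _)
  calc mlog (c • X) = cfc (fun x => Real.log (c * x)) X :=
        (cfc_comp_smul c Real.log X ((X.finite_real_spectrum.image _).continuousOn _)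
          hX.isHermitian).symm
    _ = cfc (fun x => Real.log c + Real.log x) X :=
        cfc_congr fun x hx => Real.log_mul hc.ne' (spectrum_pos_of_posDef hX x hx).ne'
    _ = cfc (fun _ : ℝ => Real.log c) X + mlog X :=
        cfc_add X _ _ (continuousOn_real_spectrum X _) (continuousOn_real_spectrum X _)
    _ = Real.log c • (1 : Mat n) + mlog X := by rw [hconst]

lemma IsCondExp.traceR_mul_mul_mul (hE : IsCondExp (B : Set (Mat n)) E) (hG : G ∈ B) (ω : Mat n) :
    traceR (ω * G * (ω * G)) =
      traceR (E ω * G * (E ω * G)) + traceR ((ω - E ω) * G * ((ω - E ω) * G)) := by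
  have hcross : traceR (E ω * G * ((ω - E ω) * G)) = 0 := by
    have hmem : G * E ω * G ∈ B := mul_mem (mul_mem hG (hE.1 ω)) hG
    rw [← mul_assoc, traceR_mul_comm, ← mul_assoc, ← mul_assoc, Matrix.mul_sub, traceR_sub,
      sub_eq_zero]
    exact congrArg Complex.re (hE.trace_mul_apply hmem ω).symm
  have hexpand : ω * G * (ω * G) = E ω * G * (E ω * G) + (ω - E ω) * G * ((ω - E ω) * G)
      + (E ω * G * ((ω - E ω) * G) + (ω - E ω) * G * (E ω * G)) := by noncomm_ring
  rw [hexpand, traceR_add, traceR_add, traceR_add, traceR_mul_comm ((ω - E ω) * G) (E ω * G),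
    hcross, add_zero, add_zero]

lemma traceR_mul_mul_mul_le_traceR (ha : a.PosSemidef) (hXa : (X - a).PosSemidef)
    (hG : G.IsHermitian) (hGXG : G * X * G = 1) : traceR (a * G * (a * G)) ≤ traceR a := by
  have hconj : (1 - G * a * G).PosSemidef := by
    have h := hXa.conjTranspose_mul_mul_same G
    rwa [hG.eq, Matrix.mul_sub, Matrix.sub_mul, hGXG] at h
  have htr := traceR_mul_nonneg ha hconj
  rw [Matrix.mul_sub, mul_one, traceR_sub, sub_nonneg] at htr
  simpa only [mul_assoc] using htr

lemma traceR_mul_mul_mul_mono (hh : h.IsHermitian) (hG : G.PosSemidef) (hGP : (P - G).PosSemidef) :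
    traceR (h * G * (h * G)) ≤ traceR (h * P * (h * P)) := by
  have hP : P.PosSemidef := by simpa only [add_sub_cancel] using hG.add hGP
  have hconj {Y : Mat n} (hY : Y.PosSemidef) : (h * Y * h).PosSemidef := by
    simpa only [hh.eq] using hY.conjTranspose_mul_mul_same h
  have h₁ := traceR_mul_nonneg (hconj hGP) hP
  have h₂ := traceR_mul_nonneg (hconj hG) hGP
  have hsplit : h * P * (h * P) - h * G * (h * G) =
      h * (P - G) * h * P + h * G * h * (P - G) := by noncomm_ring
  rw [← sub_nonneg, ← traceR_sub, hsplit, traceR_add]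
  exact add_nonneg h₁ h₂

lemma traceR_mul_mpow_mul_mpow_eq (hτ : τ.PosDef) (hh : h.IsHermitian) :
    traceR (h * mpow τ (-1 / 2) * (h * mpow τ (-1 / 2))) = snorm 2 (sandwich 2 h τ) ^ 2 := by
  have hw := (isHermitian_mpow τ (-1 / 4)).eq
  have hww : mpow τ (-1 / 2) = mpow τ (-1 / 4) * mpow τ (-1 / 4) := by
    rw [mpow_mul_mpow hτ]
    norm_num
  rw [snorm_two_sq, sandwich_two, conjTranspose_mul, conjTranspose_mul, hw, hh.eq, hww,
    mul_assoc (mpow τ (-1 / 4)), traceR_mul_comm (mpow τ (-1 / 4))]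
  noncomm_ring

/- With `X = E ω + δ τ` and `G = X ^ (-1/2)`, the quadratic bound on the relative entropy splits
into a diagonal part, at most `Tr (E ω)`, and a part orthogonal to `B`, at most `δ` because
`G ≤ (δ τ) ^ (-1/2)`. -/
lemma IsCondExp.traceR_mul_mlog_sub_mul_mlog_add_le (hE : IsCondExp (B : Set (Mat n)) E)
    (hω : ω.PosSemidef) (hτ : τ.PosDef) (hτB : τ ∈ B) {δ : ℝ} (hδ : 0 < δ)
    (h : snorm 2 (sandwich 2 (ω - E ω) τ) ≤ δ) :
    traceR (ω * mlog ω - ω * mlog (E ω + δ • τ)) ≤ δ := by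
  let X := E ω + δ • τ
  let G := mpow X (-1 / 2)
  have hEω : (E ω).PosSemidef := hE.posSemidef_apply hω
  have hδτ : (δ • τ).PosDef := hτ.smul hδ
  have hX : X.PosDef := hδτ.posSemidef_add hEω
  have hXB : X ∈ B := add_mem (hE.1 ω) (B.smul_mem hτB (δ : ℂ))
  have hGB : G ∈ B := cfc_mem B hX.isHermitian hXB _
  have hGXG : G * X * G = 1 := by
    conv_lhs => rw [← mpow_one hX.isHermitian]
    rw [mpow_mul_mpow hX, mpow_mul_mpow hX, ← mpow_zero hX.isHermitian]
    norm_num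
  have hdiag : traceR (E ω * G * (E ω * G)) ≤ traceR ω := by
    have hXa : (X - E ω).PosSemidef := by simpa only [X, add_sub_cancel_left] using hδτ.posSemidef
    refine (traceR_mul_mul_mul_le_traceR hEω hXa (isHermitian_mpow X _) hGXG).trans_eq ?_
    exact congrArg Complex.re (hE.trace_apply ω)
  have hoff : traceR ((ω - E ω) * G * ((ω - E ω) * G)) ≤ δ := by
    have hherm : (ω - E ω).IsHermitian := hω.isHermitian.sub hEω.isHermitian
    have hXτ : (X - δ • τ).PosSemidef := by simpa only [X, add_sub_cancel_right] using hEω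
    calc traceR ((ω - E ω) * G * ((ω - E ω) * G))
        ≤ traceR ((ω - E ω) * mpow (δ • τ) (-1 / 2) * ((ω - E ω) * mpow (δ • τ) (-1 / 2))) :=
          traceR_mul_mul_mul_mono hherm (posSemidef_mpow hX.posSemidef _)
            (mpow_antitone (by norm_num) hδτ hXτ)
      _ = δ⁻¹ * snorm 2 (sandwich 2 (ω - E ω) τ) ^ 2 := by
          have hpow : δ ^ (-1 / 2 : ℝ) * δ ^ (-1 / 2 : ℝ) = δ⁻¹ := by
            rw [← Real.rpow_add hδ, ← Real.rpow_neg_one]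
            norm_num
          rw [← traceR_mul_mpow_mul_mpow_eq hτ hherm, mpow_smul hτ.posSemidef hδ.le,
            Matrix.mul_smul, smul_mul_smul_comm, traceR_smul, hpow]
      _ ≤ δ⁻¹ * δ ^ 2 := by gcongr; exact snorm_two_nonneg _
      _ = δ := by field_simp
  have hquad := traceR_mul_mlog_sub_mul_mlog_le_quadratic hω hX
  rw [hE.traceR_mul_mul_mul hGB] at hquad
  linarith

lemma IsCondExp.exists_traceR_mul_mlog_sub_le (hE : IsCondExp (B : Set (Mat n)) E)
    (hω : IsDensity ω) (hτ : τ.PosDef) (hτd : IsDensity τ) (hτB : τ ∈ B) {δ : ℝ} (hδ : 0 < δ)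
    (h : snorm 2 (sandwich 2 (ω - E ω) τ) ≤ δ) :
    ∃ ξ ∈ B, IsDensity ξ ∧ ξ.PosDef ∧ traceR (ω * mlog ω - ω * mlog ξ) ≤ 2 * δ := by
  have hX : (E ω + δ • τ).PosDef := (hτ.smul hδ).posSemidef_add (hE.posSemidef_apply hω.1)
  have hc : 0 < (1 + δ)⁻¹ := by positivity
  have hξ : ((1 + δ)⁻¹ • (E ω + δ • τ)).PosDef := hX.smul hc
  refine ⟨_, B.smul_mem (add_mem (hE.1 ω) (B.smul_mem hτB (δ : ℂ))) (((1 + δ)⁻¹ : ℝ) : ℂ),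
    ⟨hξ.posSemidef, ?_⟩, hξ, ?_⟩
  · rw [trace_smul, trace_add, trace_smul, hE.trace_apply, hω.2, hτd.2]
    have hne : (1 + δ : ℂ) ≠ 0 := by exact_mod_cast (by positivity : 1 + δ ≠ 0)
    simpa using inv_mul_cancel₀ hne
  · have hlog : Real.log (1 + δ) ≤ δ := by
      linarith [Real.log_le_sub_one_of_pos (by positivity : 0 < 1 + δ)]
    have hX' := hE.traceR_mul_mlog_sub_mul_mlog_add_le hω.1 hτ hτB hδ h
    change traceR (ω * mlog ω - ω * mlog ((1 + δ)⁻¹ • (E ω + δ • τ))) ≤ 2 * δ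
    rw [mlog_smul hX hc, Matrix.mul_add, Matrix.mul_smul, mul_one, Real.log_inv]
    rw [traceR_sub] at hX' ⊢
    rw [traceR_add, traceR_smul, hω.traceR_eq_one]
    linarith

end EntropyBound

section SandwichedRenyi

variable {ρ σ : Mat n} {B : StarSubalgebra ℂ (Mat n)} {r : ℝ}

lemma suppLe_of_posDef (hσ : σ.PosDef) (ρ : Mat n) : suppLe ρ σ := fun v hv => by
  rw [mulVec_injective_of_isUnit hσ.isUnit (hv.trans (mulVec_zero σ).symm), mulVec_zero]

lemma mpow_add_smul_one (hσ : σ.IsHermitian) (s r : ℝ) :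
    mpow (σ + s • 1) r = cfc (fun x : ℝ => (x + s) ^ r) σ := by
  have hadd : cfc (fun x : ℝ => x + s) σ = σ + s • 1 := by
    rw [← Algebra.algebraMap_eq_smul_one]
    exact (cfc_add_const s id σ (continuousOn_real_spectrum σ _) hσ).trans
      (congrArg (· + _) (cfc_id ℝ σ hσ))
  rw [mpow, ← hadd]
  exact (cfc_comp (fun x : ℝ => x ^ r) (fun x => x + s) σ hσ
    ((σ.finite_real_spectrum.image _).continuousOn _) (continuousOn_real_spectrum σ _)).symm

/-- The projection onto the support of a Hermitian matrix. -/
def supportProj (σ : Mat n) : Mat n := cfc (fun x : ℝ => if x = 0 then 0 else 1) σ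

lemma mul_supportProj_of_suppLe (hσ : σ.IsHermitian) (h : suppLe ρ σ) : ρ * supportProj σ = ρ := by
  have hσe : σ * supportProj σ = σ := by
    have hid : cfc (fun x : ℝ => x) σ = σ := cfc_id' ℝ σ hσ
    calc σ * supportProj σ = cfc (fun x : ℝ => x) σ * supportProj σ := by rw [hid]
      _ = cfc (fun x : ℝ => x) σ := by
        rw [supportProj, cfc_mul_cfc]
        refine cfc_congr fun x _ => ?_
        by_cases hx : x = 0 <;> simp [hx]
      _ = σ := hid
  have hzero : ρ * (1 - supportProj σ) = 0 := by
    refine ext_iff_mulVec.2 fun v => ?_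
    have hv : σ *ᵥ ((1 - supportProj σ) *ᵥ v) = 0 := by
      rw [mulVec_mulVec, Matrix.mul_sub, mul_one, hσe, sub_self, zero_mulVec]
    rw [← mulVec_mulVec, h _ hv, zero_mulVec]
  rw [Matrix.mul_sub, mul_one, sub_eq_zero] at hzero
  exact hzero.symm

lemma posSemidef_one_sub_cfc_mul_cfc (hσ : σ.IsHermitian) {k : ℝ → ℝ}
    (hk : ∀ x ∈ spectrum ℝ σ, 0 ≤ k x ∧ k x ≤ 1) : (1 - cfc k σ * cfc k σ).PosSemidef := by
  have hcfc : cfc (fun x => 1 - k x * k x) σ = 1 - cfc k σ * cfc k σ := by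
    rw [cfc_mul_cfc]
    exact (cfc_sub _ _ σ (continuousOn_real_spectrum σ _) (continuousOn_real_spectrum σ _)).trans
      (congrArg (· - _) (cfc_const_one ℝ σ hσ))
  rw [← hcfc]
  refine posSemidef_cfc fun x hx => ?_
  obtain ⟨hk0, hk1⟩ := hk x hx
  nlinarith

lemma exists_contraction_mpow_add_smul_one (hσ : σ.PosSemidef) {s : ℝ} (hs : 0 < s) :
    ∃ K : Mat n, K.IsHermitian ∧ (1 - K * K).PosSemidef ∧
      mpow (σ + s • 1) (-1 / 4) * supportProj σ = K * mpow σ (-1 / 4) := by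
  let k : ℝ → ℝ := fun x => (x + s) ^ (-1 / 4 : ℝ) * x ^ (1 / 4 : ℝ)
  have hk (x : ℝ) (hx : x ∈ spectrum ℝ σ) : 0 ≤ k x ∧ k x ≤ 1 := by
    have hx0 := spectrum_nonneg_of_posSemidef hσ x hx
    have hxs : 0 < x + s := add_pos_of_nonneg_of_pos hx0 hs
    have hw : 0 ≤ (x + s) ^ (-1 / 4 : ℝ) := Real.rpow_nonneg hxs.le _
    refine ⟨mul_nonneg hw (Real.rpow_nonneg hx0 _), ?_⟩
    calc k x ≤ (x + s) ^ (-1 / 4 : ℝ) * (x + s) ^ (1 / 4 : ℝ) :=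
          mul_le_mul_of_nonneg_left
            (Real.rpow_le_rpow hx0 (le_add_of_nonneg_right hs.le) (by norm_num)) hw
      _ = 1 := by
          rw [← Real.rpow_add hxs]
          norm_num
  refine ⟨cfc k σ, isHermitian_cfc k σ, posSemidef_one_sub_cfc_mul_cfc hσ.isHermitian hk, ?_⟩
  rw [mpow_add_smul_one hσ.isHermitian, supportProj, mpow, cfc_mul_cfc, cfc_mul_cfc]
  refine cfc_congr fun x hx => ?_
  rcases (spectrum_nonneg_of_posSemidef hσ x hx).eq_or_lt with rfl | hx0
  · norm_num [k]
  · simp only [k, if_neg hx0.ne', mul_assoc, ← Real.rpow_add hx0]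
    norm_num

lemma snorm_two_sandwich_add_smul_one_le (hρ : ρ.IsHermitian) (hσ : σ.PosSemidef)
    (h : suppLe ρ σ) {s : ℝ} (hs : 0 < s) :
    snorm 2 (sandwich 2 ρ (σ + s • 1)) ≤ snorm 2 (sandwich 2 ρ σ) := by
  obtain ⟨K, hK, hcontr, hKe⟩ := exists_contraction_mpow_add_smul_one hσ hs
  have he : (supportProj σ).IsHermitian := isHermitian_cfc _ σ
  have heK : supportProj σ * mpow (σ + s • 1) (-1 / 4) = mpow σ (-1 / 4) * K := by
    have hadj := congrArg conjTranspose hKe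
    rwa [conjTranspose_mul, conjTranspose_mul, he.eq, hK.eq, (isHermitian_mpow _ _).eq,
      (isHermitian_mpow _ _).eq] at hadj
  have hρe : supportProj σ * ρ * supportProj σ = ρ := by
    have hright := mul_supportProj_of_suppLe hσ.isHermitian h
    have hadj := congrArg conjTranspose hright
    rw [conjTranspose_mul, hρ.eq, he.eq] at hadj
    rw [hadj, hright]
  have hsandwich : sandwich 2 ρ (σ + s • 1) = K * sandwich 2 ρ σ * Kᴴ := by
    calc sandwich 2 ρ (σ + s • 1)
        = mpow (σ + s • 1) (-1 / 4) * supportProj σ * ρ *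
            (supportProj σ * mpow (σ + s • 1) (-1 / 4)) := by
          rw [sandwich_two]
          conv_lhs => rw [← hρe]
          noncomm_ring
      _ = K * sandwich 2 ρ σ * Kᴴ := by
          rw [hKe, heK, sandwich_two, hK.eq]
          noncomm_ring
  rw [hsandwich]
  exact snorm_two_mul_mul_conjTranspose_le (by rwa [hK.eq]) (sandwich 2 ρ σ)

lemma snorm_two_sandwich_smul_sq (hσ : σ.PosSemidef) {c : ℝ} (hc : 0 < c) (ρ : Mat n) :
    snorm 2 (sandwich 2 ρ (c • σ)) ^ 2 = c⁻¹ * snorm 2 (sandwich 2 ρ σ) ^ 2 := by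
  have hpow : c ^ (-1 / 4 : ℝ) * c ^ (-1 / 4 : ℝ) * (c ^ (-1 / 4 : ℝ) * c ^ (-1 / 4 : ℝ)) =
      c⁻¹ := by
    rw [← Real.rpow_add hc, ← Real.rpow_add hc, ← Real.rpow_neg_one]
    norm_num
  have hsmul : sandwich 2 ρ (c • σ) =
      (c ^ (-1 / 4 : ℝ) * c ^ (-1 / 4 : ℝ)) • sandwich 2 ρ σ := by
    rw [sandwich_two, sandwich_two, mpow_smul hσ hc.le, Matrix.smul_mul, smul_mul_smul_comm]
  rw [hsmul, snorm_two_sq, conjTranspose_smul, star_trivial, smul_mul_smul_comm, traceR_smul, hpow,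
    snorm_two_sq]

lemma exists_posDef_snorm_two_sandwich_sq_lt (hρ : ρ.IsHermitian) (hσ : IsDensity σ) (hσB : σ ∈ B)
    (h : suppLe ρ σ) {q : ℝ} (hq : snorm 2 (sandwich 2 ρ σ) ^ 2 < q) :
    ∃ τ ∈ B, IsDensity τ ∧ τ.PosDef ∧ snorm 2 (sandwich 2 ρ τ) ^ 2 < q := by
  obtain ⟨s, hs, hsq⟩ := exists_pos_mul_lt (sub_pos.2 hq)
    (Fintype.card n * snorm 2 (sandwich 2 ρ σ) ^ 2)
  have hc : 0 < 1 + s * Fintype.card n := by positivity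
  have hσs : (σ + s • 1).PosDef := (PosDef.one.smul hs).posSemidef_add hσ.1
  have hτ : ((1 + s * Fintype.card n)⁻¹ • (σ + s • 1)).PosDef := hσs.smul (inv_pos.2 hc)
  refine ⟨_, B.smul_mem (add_mem hσB (B.smul_mem (one_mem B) (s : ℂ)))
    (((1 + s * Fintype.card n)⁻¹ : ℝ) : ℂ), ⟨hτ.posSemidef, ?_⟩, hτ, ?_⟩
  · have hne : (1 + s * Fintype.card n : ℂ) ≠ 0 := by exact_mod_cast hc.ne'
    rw [trace_smul, trace_add, trace_smul, hσ.2, trace_one]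
    simpa using inv_mul_cancel₀ hne
  · change snorm 2 (sandwich 2 ρ ((1 + s * Fintype.card n)⁻¹ • (σ + s • 1))) ^ 2 < q
    have hle := pow_le_pow_left₀ (snorm_two_nonneg _)
      (snorm_two_sandwich_add_smul_one_le hρ hσ.1 h hs) 2
    rw [snorm_two_sandwich_smul_sq hσs.posSemidef (inv_pos.2 hc), inv_inv]
    nlinarith [mul_le_mul_of_nonneg_left hle hc.le]

lemma traceR_mpow_two {X : Mat n} (hX : X.IsHermitian) : traceR (mpow X 2) = snorm 2 X ^ 2 := by
  rw [snorm_two_sq, hX.eq, mpow]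
  simp only [Real.rpow_two]
  exact congrArg traceR ((cfc_pow_id X 2 hX).trans (pow_two X))

lemma Dp_two_eq_ite (hρ : ρ.IsHermitian) (σ : Mat n) :
    Dp 2 ρ σ = if suppLe ρ σ ∧ snorm 2 (sandwich 2 ρ σ) ≠ 0 then
      ((Real.log (snorm 2 (sandwich 2 ρ σ) ^ 2) : ℝ) : EReal) else ⊤ := by
  have htwo : (2 : ℝ≥0∞).toReal = 2 := ENNReal.toReal_ofNat 2
  rw [Dp, if_neg ENNReal.ofNat_ne_top, if_neg (by norm_num), htwo,
    traceR_mpow_two (isHermitian_sandwich_two hρ σ)]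
  by_cases hsupp : suppLe ρ σ <;> by_cases h0 : snorm 2 (sandwich 2 ρ σ) = 0 <;>
    norm_num [hsupp, h0]

lemma exists_posDef_of_DpSet_two_lt (hρ : ρ.IsHermitian) (h : DpSet 2 ρ B < r) :
    ∃ σ ∈ B, IsDensity σ ∧ σ.PosDef ∧ snorm 2 (sandwich 2 ρ σ) ^ 2 < Real.exp r := by
  simp only [DpSet, iInf_lt_iff] at h
  obtain ⟨σ, ⟨hσB, hσ⟩, hlt⟩ := h
  rw [Dp_two_eq_ite hρ] at hlt
  split_ifs at hlt with hsupp
  · refine exists_posDef_snorm_two_sandwich_sq_lt hρ hσ hσB hsupp.1 ?_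
    exact (Real.log_lt_iff_lt_exp (sq_pos_of_ne_zero hsupp.2)).1 (by exact_mod_cast hlt)
  · exact absurd hlt not_top_lt

lemma DpSet_two_nonneg (hρ : IsDensity ρ) : 0 ≤ DpSet 2 ρ (B : Set (Mat n)) := by
  by_contra! hneg
  obtain ⟨σ, -, hσ, hσpos, hlt⟩ := exists_posDef_of_DpSet_two_lt (r := 0) hρ.1.isHermitian hneg
  have hone := traceR_le_snorm_two_sandwich hσpos hσ.traceR_eq_one hρ.1.isHermitian
  rw [hρ.traceR_eq_one] at hone
  rw [Real.exp_zero] at hlt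
  nlinarith

lemma le_mul_exp_DpSet_two_div_two (hρ : IsDensity ρ) (hfin : DpSet 2 ρ B ≠ ⊤) {A : EReal} {c : ℝ}
    (hc : 0 ≤ c) (h : ∀ σ ∈ B, IsDensity σ → σ.PosDef →
      A ≤ ((c * snorm 2 (sandwich 2 ρ σ) : ℝ) : EReal)) :
    A ≤ ((c * Real.exp ((DpSet 2 ρ B).toReal / 2) : ℝ) : EReal) := by
  have hbot : DpSet 2 ρ B ≠ ⊥ := ((EReal.bot_lt_zero).trans_le (DpSet_two_nonneg hρ)).ne'
  have hlarger (r : ℝ) (hr : (DpSet 2 ρ B).toReal < r) :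
      A ≤ ((c * Real.exp (r / 2) : ℝ) : EReal) := by
    have hlt : DpSet 2 ρ B < r := by
      rw [← EReal.coe_toReal hfin hbot]
      exact_mod_cast hr
    obtain ⟨σ, hσB, hσ, hσpos, hq⟩ := exists_posDef_of_DpSet_two_lt hρ.1.isHermitian hlt
    have hle : snorm 2 (sandwich 2 ρ σ) ≤ Real.exp (r / 2) := by
      rw [← add_halves r, Real.exp_add, ← sq] at hq
      exact (lt_of_pow_lt_pow_left₀ 2 (Real.exp_pos _).le hq).le
    exact (h σ hσB hσ hσpos).trans (by exact_mod_cast mul_le_mul_of_nonneg_left hle hc)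
  have hcont : Continuous fun r : ℝ => ((c * Real.exp (r / 2) : ℝ) : EReal) :=
    continuous_coe_real_ereal.comp (by fun_prop)
  exact ge_of_tendsto ((hcont.tendsto _).mono_left (nhdsWithin_le_nhds (s := Set.Ioi _)))
    (Filter.eventually_of_mem self_mem_nhdsWithin hlarger)

end SandwichedRenyi

section Finiteness

variable {k : Type*} [Fintype k] [DecidableEq k] {ρ σ X : Mat n} {c : ℝ}

lemma snorm_two_sandwich_sq_le (hρ : ρ.PosSemidef) (hσ : σ.PosDef)
    (h : (c • σ - ρ).PosSemidef) : snorm 2 (sandwich 2 ρ σ) ^ 2 ≤ c * traceR ρ := by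
  let w := mpow σ (-1 / 4)
  have hw : wᴴ = w := (isHermitian_mpow σ _).eq
  have hS : (sandwich 2 ρ σ).PosSemidef := by
    simpa only [sandwich_two, hw] using hρ.conjTranspose_mul_mul_same w
  have hdiff : (w * (c • σ - ρ) * w).PosSemidef := by
    simpa only [hw] using h.conjTranspose_mul_mul_same w
  have hwσ : w * w * σ * w * w = 1 := by
    have hσ1 : mpow σ 1 = σ := mpow_one hσ.isHermitian
    conv_lhs => rw [← hσ1]
    rw [mpow_mul_mpow hσ, mpow_mul_mpow hσ, mpow_mul_mpow hσ, mpow_mul_mpow hσ,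
      ← mpow_zero hσ.isHermitian]
    norm_num
  have htr : traceR (sandwich 2 ρ σ * (w * (c • σ - ρ) * w)) =
      c * traceR ρ - snorm 2 (sandwich 2 ρ σ) ^ 2 := by
    have hexpand : sandwich 2 ρ σ * (w * (c • σ - ρ) * w) =
        c • (w * (ρ * (w * w * σ * w))) - sandwich 2 ρ σ * sandwich 2 ρ σ := by
      rw [sandwich_two]
      simp only [Matrix.mul_sub, Matrix.sub_mul, Matrix.mul_smul, Matrix.smul_mul, mul_assoc, w]
    rw [hexpand, traceR_sub, traceR_smul, traceR_mul_comm w, mul_assoc ρ, hwσ, mul_one,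
      snorm_two_sq, hS.isHermitian.eq]
  linarith [traceR_mul_nonneg hS hdiff]

lemma Dp_two_le_log (hρ : IsDensity ρ) (hσ : IsDensity σ) (hσpos : σ.PosDef)
    (h : (c • σ - ρ).PosSemidef) : Dp 2 ρ σ ≤ Real.log c := by
  have hone := traceR_le_snorm_two_sandwich hσpos hσ.traceR_eq_one hρ.1.isHermitian
  have hle := snorm_two_sandwich_sq_le hρ.1 hσpos h
  rw [hρ.traceR_eq_one] at hone hle
  have hpos : 0 < snorm 2 (sandwich 2 ρ σ) := one_pos.trans_le hone
  rw [Dp_two_eq_ite hρ.1.isHermitian, if_pos ⟨suppLe_of_posDef hσpos ρ, hpos.ne'⟩]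
  exact_mod_cast Real.log_le_log (pow_pos hpos 2) (hle.trans_eq (mul_one c))

lemma posSemidef_card_smul_sum_sub {ι : Type*} [Fintype ι] (K : ι → Mat n) (hX : X.PosSemidef) :
    ((Fintype.card ι : ℝ) • ∑ i, K i * X * (K i)ᴴ -
      (∑ i, K i) * X * (∑ i, K i)ᴴ).PosSemidef := by
  have hsum : (Fintype.card ι : ℝ) • ∑ i, K i * X * (K i)ᴴ - (∑ i, K i) * X * (∑ i, K i)ᴴ =
      (1 / 2 : ℝ) • ∑ i, ∑ j, (K i - K j) * X * (K i - K j)ᴴ := by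
    have hcross : (∑ i, K i) * X * (∑ i, K i)ᴴ = ∑ i, ∑ j, K i * X * (K j)ᴴ := by
      simp only [conjTranspose_sum, Finset.sum_mul, Finset.mul_sum]
      exact Finset.sum_comm
    have hswap : ∑ i, ∑ j, K j * X * (K i)ᴴ = ∑ i, ∑ j, K i * X * (K j)ᴴ := Finset.sum_comm
    simp only [conjTranspose_sub, Matrix.mul_sub, Matrix.sub_mul, Finset.sum_sub_distrib,
      Finset.sum_const, Finset.card_univ, hcross, hswap, ← Finset.smul_sum]
    module
  rw [hsum]
  exact (posSemidef_sum _ fun i _ => posSemidef_sum _ fun j _ =>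
    hX.mul_mul_conjTranspose_same (K i - K j)).smul (by norm_num)

/-- The map `x ↦ Tr(x) 1`. Its amplification dominates the identity up to the factor `card n`, and
it takes values in every unital subalgebra. -/
def traceOne : Mat n →ₗ[ℂ] Mat n := (traceLinearMap n ℂ ℂ).smulRight 1

lemma sum_single_mul_mul_single (x : Mat n) :
    ∑ s, ∑ t, single s t (1 : ℂ) * x * (single s t (1 : ℂ))ᴴ = traceOne x := by
  ext i j
  simp [traceOne, Matrix.sum_apply, trace, one_apply, single_apply, ite_and]

open scoped Kronecker in
lemma blocks_one_kronecker_conj (a : Mat n) (X : Mat (k × n)) (i j : k) :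
    blocks ((1 ⊗ₖ a) * X * (1 ⊗ₖ a)ᴴ) i j = a * blocks X i j * aᴴ := by
  have hblocks (i j : k) : blocks ((1 : Mat k) ⊗ₖ a) i j = if i = j then a else 0 := by
    ext s t
    have happly : blocks ((1 : Mat k) ⊗ₖ a) i j s t = (1 : Mat k) i j * a s t := rfl
    rw [happly, one_apply]
    split_ifs <;> simp
  simp [blocks_mul_apply, blocks_conjTranspose, hblocks, apply_ite conjTranspose]

open scoped Kronecker in
lemma ampFun_traceOne_eq (X : Mat (k × n)) : ampFun k traceOne X =
    ∑ s : n, ∑ t : n, (1 ⊗ₖ single s t (1 : ℂ)) * X * (1 ⊗ₖ single s t (1 : ℂ))ᴴ :=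
  blocks.injective <| by
    ext1 i j
    simp only [map_sum, Matrix.sum_apply, blocks_one_kronecker_conj, sum_single_mul_mul_single]
    rfl

open scoped Kronecker in
lemma posSemidef_card_smul_ampFun_traceOne_sub {X : Mat (k × n)} (hX : X.PosSemidef) :
    ((Fintype.card n : ℝ) • ampFun k traceOne X - X).PosSemidef := by
  let K (s t : n) : Mat (k × n) := 1 ⊗ₖ single s t (1 : ℂ)
  have hK1 : ∑ s, K s s = 1 := by
    ext ⟨i, s⟩ ⟨j, t⟩
    by_cases hst : s = t <;>
      simp [K, Matrix.sum_apply, one_apply, single_apply, ite_and, Prod.ext_iff, hst]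
  have hpinch := posSemidef_card_smul_sum_sub (fun s => K s s) hX
  have hoff : (∑ s, (∑ t, K s t * X * (K s t)ᴴ - K s s * X * (K s s)ᴴ)).PosSemidef := by
    refine posSemidef_sum _ fun s _ => ?_
    rw [← Finset.add_sum_erase _ _ (Finset.mem_univ s), add_sub_cancel_left]
    exact posSemidef_sum _ fun t _ => hX.mul_mul_conjTranspose_same (K s t)
  rw [hK1, conjTranspose_one, mul_one, one_mul] at hpinch
  convert hpinch.add (hoff.smul (Nat.cast_nonneg (α := ℝ) (Fintype.card n))) using 1
  rw [ampFun_traceOne_eq, Finset.sum_sub_distrib]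
  module

lemma trace_ampFun_traceOne (X : Mat (k × n)) :
    (ampFun k traceOne X).trace = Fintype.card n * X.trace := by
  rw [trace_eq_sum_blocks, trace_eq_sum_blocks X, Finset.mul_sum]
  refine Finset.sum_congr rfl fun i _ => ?_
  rw [blocks_ampFun]
  simp [traceOne, mul_comm]

lemma posSemidef_ampFun_traceOne {X : Mat (k × n)} (hX : X.PosSemidef) :
    (ampFun k traceOne X).PosSemidef := by
  rw [ampFun_traceOne_eq]
  exact posSemidef_sum _ fun s _ => posSemidef_sum _ fun t _ => hX.mul_mul_conjTranspose_same _

lemma ampFun_traceOne_mem (B : StarSubalgebra ℂ (Mat n)) (X : Mat (k × n)) :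
    ampFun k traceOne X ∈ ampAlg k B :=
  fun i j => B.smul_mem (one_mem B) (blocks X i j).trace

lemma IsDensity.nonempty (hρ : IsDensity ρ) : Nonempty n := by
  by_contra hempty
  have := not_nonempty_iff.1 hempty
  simpa [trace] using hρ.2

lemma exists_posDef_mem_ampAlg_dominating (B : StarSubalgebra ℂ (Mat n)) {ρ : Mat (k × n)}
    (hρ : IsDensity ρ) : ∃ σ ∈ ampAlg k B, IsDensity σ ∧ σ.PosDef ∧
      ((2 * Fintype.card n ^ 2 : ℝ) • σ - ρ).PosSemidef := by
  have : Nonempty k := hρ.nonempty.map Prod.fst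
  have : Nonempty n := hρ.nonempty.map Prod.snd
  have ha : (0 : ℝ) < Fintype.card k := Nat.cast_pos.2 Fintype.card_pos
  have hb : (0 : ℝ) < Fintype.card n := Nat.cast_pos.2 Fintype.card_pos
  set a : ℝ := (Fintype.card k : ℝ) with ha_def
  set b : ℝ := (Fintype.card n : ℝ) with hb_def
  let Δ := ampFun k traceOne ρ
  let σ := (2 * b)⁻¹ • Δ + (2 * a * b)⁻¹ • (1 : Mat (k × n))
  have hσ : σ.PosDef := .posSemidef_add
    ((posSemidef_ampFun_traceOne hρ.1).smul (by positivity)) (PosDef.one.smul (by positivity))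
  have htr : σ.trace = 1 := by
    have ha' : (a : ℂ) ≠ 0 := Complex.ofReal_ne_zero.2 ha.ne'
    have hb' : (b : ℂ) ≠ 0 := Complex.ofReal_ne_zero.2 hb.ne'
    have hcard : ((Fintype.card (k × n) : ℕ) : ℂ) = a * b := by simp [ha_def, hb_def]
    have hΔ : Δ.trace = b := by
      rw [trace_ampFun_traceOne, hρ.2, mul_one, hb_def, Complex.ofReal_natCast]
    rw [trace_add, trace_smul, trace_smul, trace_one, hΔ, hcard, Complex.real_smul,
      Complex.real_smul]
    push_cast
    field_simp
    norm_num
  refine ⟨σ, add_mem ?_ ?_, ⟨hσ.posSemidef, htr⟩, hσ, ?_⟩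
  · exact (ampAlg k B).smul_mem (ampFun_traceOne_mem B ρ) (((2 * b)⁻¹ : ℝ) : ℂ)
  · exact (ampAlg k B).smul_mem (one_mem _) (((2 * a * b)⁻¹ : ℝ) : ℂ)
  · have hsplit : (2 * b ^ 2) • σ - ρ = (b • Δ - ρ) + (b / a) • (1 : Mat (k × n)) := by
      have hΔ : 2 * b ^ 2 * (2 * b)⁻¹ = b := by field_simp
      have hone : 2 * b ^ 2 * (2 * a * b)⁻¹ = b / a := by field_simp
      rw [smul_add, smul_smul, smul_smul, hΔ, hone]
      abel
    rw [hsplit]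
    exact (posSemidef_card_smul_ampFun_traceOne_sub hρ.1).add (PosSemidef.one.smul (by positivity))

lemma DpSet_two_ampAlg_le (B : StarSubalgebra ℂ (Mat n)) {ρ : Mat (k × n)} (hρ : IsDensity ρ) :
    DpSet 2 ρ (ampAlg k B : Set (Mat (k × n))) ≤ Real.log (2 * Fintype.card n ^ 2) := by
  obtain ⟨σ, hσB, hσ, hσpos, hdom⟩ := exists_posDef_mem_ampAlg_dominating B hρ
  exact (iInf₂_le σ ⟨hσB, hσ⟩).trans (Dp_two_le_log hρ hσ hσpos hdom)

lemma DpCb_two_ne_top (B : StarSubalgebra ℂ (Mat n)) : DpCb 2 (B : Set (Mat n)) ≠ ⊤ := by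
  refine ne_top_of_le_ne_top (EReal.coe_ne_top (Real.log (2 * Fintype.card n ^ 2))) ?_
  refine iSup_le fun k => iSup₂_le fun ρ hρ => ?_
  rw [← coe_ampAlg]
  exact DpSet_two_ampAlg_le B hρ.2

lemma DpSet_two_ampAlg_le_DpCb {k : ℕ} (B : StarSubalgebra ℂ (Mat n)) {ρ : Mat (Fin k × n)}
    (hρ : IsDensity ρ) :
    DpSet 2 ρ (ampAlg (Fin k) B : Set (Mat (Fin k × n))) ≤ DpCb 2 (B : Set (Mat n)) := by
  rw [coe_ampAlg]
  exact (le_iSup₂ (f := fun ρ (_ : ρ ∈ {ρ ∈ Set.univ | IsDensity ρ}) =>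
    DpSet 2 ρ (tensorSpan Set.univ (B : Set (Mat n)))) ρ ⟨Set.mem_univ ρ, hρ⟩).trans
    (le_iSup (fun k : ℕ => DpRel 2 Set.univ (tensorSpan (Set.univ : Set (Mat (Fin k))) _)) k)

end Finiteness

section Convergence

variable {B : StarSubalgebra ℂ (Mat n)} {T E : Mat n →ₗ[ℂ] Mat n} {μ : ℝ} {ρ ω τ : Mat n}

lemma Dp_one_eq_of_posDef (hτ : τ.PosDef) (ω : Mat n) :
    Dp 1 ω τ = traceR (ω * mlog ω - ω * mlog τ) := by
  rw [Dp, if_neg ENNReal.one_ne_top, if_pos rfl, DU, if_pos (suppLe_of_posDef hτ ω)]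

lemma IsCondExp.DpSet_one_le_two_mul (hE : IsCondExp (B : Set (Mat n)) E) (hω : IsDensity ω)
    (hτ : τ.PosDef) (hτd : IsDensity τ) (hτB : τ ∈ B) {q : ℝ}
    (h : snorm 2 (sandwich 2 (ω - E ω) τ) ≤ q) : DpSet 1 ω B ≤ ((2 * q : ℝ) : EReal) := by
  refine EReal.le_of_forall_lt_iff_le.1 fun z hz => ?_
  have hqz : q < z / 2 := by linarith [EReal.coe_lt_coe_iff.1 hz]
  have hδ : 0 < z / 2 := ((snorm_two_nonneg _).trans h).trans_lt hqz
  obtain ⟨ξ, hξB, hξ, hξpos, hle⟩ :=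
    hE.exists_traceR_mul_mlog_sub_le hω hτ hτd hτB hδ (h.trans hqz.le)
  refine (iInf₂_le ξ ⟨hξB, hξ⟩).trans ?_
  rw [Dp_one_eq_of_posDef hξpos]
  exact_mod_cast hle.trans_eq (mul_div_cancel₀ z two_ne_zero)

lemma IsDecoherence.DpSet_one_map_le (h : IsDecoherence B T E μ) (hρ : IsDensity ρ)
    (hfin : DpSet 2 ρ B ≠ ⊤) :
    DpSet 1 (T ρ) B ≤ ((2 * μ * Real.exp ((DpSet 2 ρ B).toReal / 2) : ℝ) : EReal) := by
  refine le_mul_exp_DpSet_two_div_two hρ hfin (mul_nonneg zero_le_two h.rate_nonneg)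
    fun σ hσB hσ hσpos => ?_
  rw [mul_assoc]
  exact h.condExp.DpSet_one_le_two_mul (h.isDensity_map hρ) (h.map_posDef hσpos hσB)
    (h.isDensity_map hσ) (h.map_mem σ hσB) (h.snorm_two_sandwich_map_sub_le hσ.1 hσB ρ)

lemma IsDecoherence.snorm_one_map_sub_le (h : IsDecoherence B T E μ) (hρ : IsDensity ρ)
    (hfin : DpSet 2 ρ B ≠ ⊤) :
    snorm 1 (T ρ - T (E ρ)) ≤ μ * Real.exp ((DpSet 2 ρ B).toReal / 2) := by
  refine EReal.coe_le_coe_iff.1 <| le_mul_exp_DpSet_two_div_two hρ hfin h.rate_nonneg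
    fun σ hσB hσ hσpos => EReal.coe_le_coe_iff.2 ?_
  have hherm : (T ρ - E (T ρ)).IsHermitian := (h.isDensity_map hρ).1.isHermitian.sub
    (h.condExp.isDensity_apply (h.isDensity_map hρ)).1.isHermitian
  rw [← h.condExp_map]
  exact (snorm_one_le_snorm_two_sandwich (h.map_posDef hσpos hσB)
    (h.isDensity_map hσ).traceR_eq_one hherm).trans (h.snorm_two_sandwich_map_sub_le hσ.1 hσB ρ)

theorem IsDecoherence.DpSet_one_iterate_le (h : IsDecoherence B T E μ) (hρ : IsDensity ρ)
    (hfin : DpSet 2 ρ B ≠ ⊤) {k : ℕ} (hk : 1 ≤ k) :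
    DpSet 1 (T^[k] ρ) B ≤
      ((2 * μ ^ k * Real.exp ((DpSet 2 ρ B).toReal / 2) : ℝ) : EReal) := by
  rw [← Module.End.pow_apply]
  exact (h.pow hk).DpSet_one_map_le hρ hfin

lemma pow_mul_exp_le_of_log_le {μ ε D : ℝ} {k : ℕ} (hk : 1 ≤ k) (hμ0 : 0 ≤ μ) (hμ1 : μ < 1)
    (hε : 0 < ε) (h : (Real.log (1 / μ))⁻¹ * (Real.log (4 / ε ^ 2) + D / 2) ≤ k) :
    μ ^ k * Real.exp (D / 2) ≤ ε ^ 2 / 4 := by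
  rcases hμ0.eq_or_lt with rfl | hμ
  · rw [zero_pow (Nat.one_le_iff_ne_zero.1 hk), zero_mul]
    positivity
  have hlog : 0 < Real.log (1 / μ) := Real.log_pos ((one_lt_div hμ).2 hμ1)
  have hexponent : Real.log (4 / ε ^ 2) + D / 2 ≤ k * Real.log (1 / μ) :=
    (inv_mul_le_iff₀ hlog).1 h |>.trans_eq (mul_comm _ _)
  rw [one_div, Real.log_inv, ← inv_div, Real.log_inv] at hexponent
  have hpos : 0 < ε ^ 2 / 4 := by positivity
  rw [← Real.log_le_log_iff (by positivity) hpos, Real.log_mul (pow_pos hμ k).ne'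
    (Real.exp_pos _).ne', Real.log_pow, Real.log_exp]
  linarith

/- The trace distance `x` satisfies both `x ≤ 2` and `x ≤ μ ^ k * exp (D / 2) ≤ ε ^ 2 / 4`, so that
`x ^ 2 ≤ 2 * (ε ^ 2 / 4)`. -/
theorem IsDecoherence.snorm_one_iterate_sub_le (h : IsDecoherence B T E μ) (hρ : IsDensity ρ)
    (hμ : μ < 1) {D : EReal} (hD : DpSet 2 ρ B ≤ D) (hDtop : D ≠ ⊤) {k : ℕ} (hk : 1 ≤ k) {ε : ℝ}
    (hε : 0 < ε)
    (hle : (Real.log (1 / μ))⁻¹ * (Real.log (4 / ε ^ 2) + D.toReal / 2) ≤ k) :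
    snorm 1 (T^[k] ρ - T^[k] (E ρ)) ≤ ε := by
  have hk' := h.pow hk
  have hbot : DpSet 2 ρ B ≠ ⊥ := (EReal.bot_lt_zero.trans_le (DpSet_two_nonneg hρ)).ne'
  have hmono := EReal.toReal_le_toReal hD hbot hDtop
  rw [← Module.End.pow_apply, ← Module.End.pow_apply]
  have hsmall : snorm 1 ((T ^ k) ρ - (T ^ k) (E ρ)) ≤ ε ^ 2 / 4 :=
    calc snorm 1 ((T ^ k) ρ - (T ^ k) (E ρ))
        ≤ μ ^ k * Real.exp ((DpSet 2 ρ B).toReal / 2) :=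
          hk'.snorm_one_map_sub_le hρ (ne_top_of_le_ne_top hDtop hD)
      _ ≤ μ ^ k * Real.exp (D.toReal / 2) := by have := hk'.rate_nonneg; gcongr
      _ ≤ ε ^ 2 / 4 := pow_mul_exp_le_of_log_le hk h.rate_nonneg hμ hε hle
  have hρk := hk'.isDensity_map hρ
  have hEρk := hk'.isDensity_map (h.condExp.isDensity_apply hρ)
  have htwo := snorm_one_sub_le hρk.1 hEρk.1
  rw [hρk.traceR_eq_one, hEρk.traceR_eq_one] at htwo
  nlinarith

lemma IsCP.isPeriodicPt_ampFun_of_symm (hT : IsCP T) (hT1 : T 1 = 1)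
    (hsymm : ∀ x y : Mat n, (xᴴ * T y).trace = ((T x)ᴴ * y).trace)
    (hE : IsCondExp (multDomain T) E) {k : Type*} [Fintype k] [DecidableEq k] (X : Mat (k × n)) :
    Function.IsPeriodicPt (ampFun k T) 2 (ampFun k E X) :=
  blocks.injective <| by
    ext1 i j
    exact hT.map_map_of_symm hT1 hsymm (hE.1 (blocks X i j))

end Convergence

/-- discrete-time decoherence.  Let `T` be a unital completely
positive map on `M_m`, self-adjoint with respect to `Tr`, `N` its
multiplicative domain, `E` the trace preserving conditional expectation onto
`N`, and `μ = ‖T∘(I-E)‖_{2→2} < 1`.  Then for every `n ≥ 1`, every density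
`ρ ∈ M_n ⊗ M_m` and every `k ≥ 1`,
`D((id ⊗ T)^k(ρ)‖M_n ⊗ N) ≤ 2 μ^k exp(D₂(ρ‖M_n ⊗ N)/2)`; moreover if
`k ≥ (log(1/μ))⁻¹ (log(4/ε²) + D_{2,cb}(M_m‖N)/2)` then
`‖(id ⊗ T)^k(ρ) - (id ⊗ E)(ρ)‖₁ ≤ ε` for `k` even, and
`‖(id ⊗ T)^k(ρ) - (id ⊗ (T∘E))(ρ)‖₁ ≤ ε` for `k` odd. -/
theorem statement18 {m : ℕ} (T : Mat (Fin m) →ₗ[ℂ] Mat (Fin m))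
    (hT1 : T 1 = 1) (hTcp : IsCP T)
    (hTsa : ∀ x y : Mat (Fin m), (xᴴ * T y).trace = ((T x)ᴴ * y).trace)
    (E : Mat (Fin m) →ₗ[ℂ] Mat (Fin m)) (hE : IsCondExp (multDomain T) E)
    (μ : ℝ) (hμdef : μ = norm22 (T ∘ₗ (LinearMap.id - E))) (hμ : μ < 1) :
    ∀ (n : ℕ), 1 ≤ n → ∀ ρ : Mat (Fin n × Fin m), IsDensity ρ →
      ∀ k : ℕ, 1 ≤ k →
        (DpSet 1 ((ampFun (Fin n) T)^[k] ρ)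
            (tensorSpan (Set.univ : Set (Mat (Fin n))) (multDomain T)) ≤
          ((2 * μ ^ k *
            Real.exp ((DpSet 2 ρ
              (tensorSpan (Set.univ : Set (Mat (Fin n))) (multDomain T))).toReal / 2)
            : ℝ) : EReal)) ∧
        ∀ ε : ℝ, 0 < ε →
          (Real.log (1/μ))⁻¹ * (Real.log (4/ε^2) + (DpCb 2 (multDomain T)).toReal / 2)
              ≤ (k : ℝ) →
            (Even k →
              snorm 1 ((ampFun (Fin n) T)^[k] ρ - ampFun (Fin n) E ρ) ≤ ε) ∧
            (Odd k →
              snorm 1 ((ampFun (Fin n) T)^[k] ρ - ampFun (Fin n) (T ∘ₗ E) ρ) ≤ ε) := by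
  intro n _ ρ hρ k hk
  have hbase : IsDecoherence (multDomainAlg hTcp hT1) T E μ :=
    hμdef ▸ hTcp.isDecoherence_of_symm hT1 hTsa hE
  have hamp := hbase.amp (k := Fin n) (hTcp n)
  have hcb := DpSet_two_ampAlg_le_DpCb (multDomainAlg hTcp hT1) hρ
  have hcbtop := DpCb_two_ne_top (multDomainAlg hTcp hT1)
  have hperiod := hTcp.isPeriodicPt_ampFun_of_symm hT1 hTsa hE ρ
  refine ⟨?_, fun ε hε hle => ?_⟩
  · have hentropy := hamp.DpSet_one_iterate_le hρ (ne_top_of_le_ne_top hcbtop hcb) hk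
    rwa [coe_ampAlg] at hentropy
  · have hnorm : snorm 1 ((ampFun (Fin n) T)^[k] ρ - (ampFun (Fin n) T)^[k] (ampFun (Fin n) E ρ))
        ≤ ε := hamp.snorm_one_iterate_sub_le hρ hμ hcb hcbtop hk hε hle
    refine ⟨fun heven => ?_, ?_⟩
    · rwa [(hperiod.trans_dvd heven.two_dvd).eq] at hnorm
    · rintro ⟨i, rfl⟩
      have hodd : (ampFun (Fin n) T)^[2 * i + 1] (ampFun (Fin n) E ρ) =
          ampFun (Fin n) (T ∘ₗ E) ρ := by
        rw [Function.iterate_succ_apply', (hperiod.trans_dvd (dvd_mul_right 2 i)).eq]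
        rfl
      rwa [hodd] at hnorm

end GJL
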